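/- arXiv:0903.4785 — 2 statements merged into one kernel-verified Lean document; each statement's English description precedes it below -/
import Mathlib

section
/- Let N ≥ 1, let w ≥ 2 be even, let n be an integer with 0 < n < w, set ñ = w − n, let D > 1 with N ∣ D, and let h be an integer with gcd(h,D) = 1. Let a be an integer with a·h ≡ −1 (mod D). Define S_{4,h}(z) = 2·Σ_{k ∈ ℤ} 1/(((a+kD)z − 1/D)^{ñ+1}·(Dz)^{n+1}) for z in the upper half-plane, and F_{4,h}(X) = ∫₀^{i∞} S_{4,h}(z)(X−z)^w dz + (−1)^{n−1}·∫₀^{i∞} S_{4,−h}(z)(X+z)^w dz. Then for every nonzero complex number X: F_{4,h}(X) = c_n·(2i)^{w+1}·D^{w}·X^{w}·B_{n+1}({a/D} − 1/(D²X))/(n+1), where c_n = (−1)^n·4πi·(2i)^{−w−1}·C(w,n). -/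
open MeasureTheory Complex Real

noncomputable section

/-- The contour integral `∫₀^{i∞} F(z) dz` along the positive imaginary axis `z = iy`. -/
def intI (F : ℂ → ℂ) : ℂ := Complex.I * ∫ y in Set.Ioi (0 : ℝ), F (Complex.I * y)

/-- The constant `c_n = (−1)^n·4πi·(2i)^{−w−1}·C(w,n)`. -/
def cconst (w n : ℕ) : ℂ :=
  (-1) ^ n * 4 * Real.pi * Complex.I * (2 * Complex.I) ^ (-(w : ℤ) - 1) * (w.choose n)

/-- The `k`-th Bernoulli polynomial evaluated at a complex number. -/
def bpoly (k : ℕ) (x : ℂ) : ℂ := Polynomial.aeval x (Polynomial.bernoulli k)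

/-- `S_{4,h}(z) = 2 Σ_{k ∈ ℤ} 1/(((a+kD)z − 1/D)^{ñ+1}(Dz)^{n+1})`, where `ah ≡ −1 (mod D)`.
(Replacing `a` by `−a` gives `S_{4,−h}`.) -/
def S4 (D w n : ℕ) (a : ℤ) (z : ℂ) : ℂ :=
  2 * ∑' k : ℤ, 1 / ((((a : ℂ) + k * D) * z - 1 / D) ^ (w - n + 1) *
      ((D : ℂ) * z) ^ (n + 1))

/-!
The substitution `τ = a / D - 1 / (D² z)` turns `S4` into the periodized power
`L(τ) = ∑ (τ + k)^(-(w - n + 1))` and the two period integrals into the two halves, above and below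
the real axis, of the integral of `L(τ) (x - τ)^w` over the line `Re τ = c`, where `c = {a / D}` and
`x = c - 1 / (D² X)`. By Cauchy's theorem that integral is independent of `c ∈ (0, 1)`, and it is a
polynomial in `x`. For real `x ∈ (0, 1)` one may therefore move the line to `c = x`, where the
integral is a sum of two Mellin transforms; expanding `L` in powers of `exp (2πiτ)` evaluates them
as the Fourier series of the Bernoulli polynomial `B_{n+1}` at `x`.
-/

open Set Filter Topology
open scoped Nat Interval

/-! ### Vertical contours -/

theorem integral_vertical_eq_of_differentiableOn {f : ℂ → ℂ} {a b : ℝ} {g : ℝ → ℝ}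
    (hf : DifferentiableOn ℂ f (re ⁻¹' [[a, b]])) (hg : Tendsto g atTop (𝓝 0))
    (hfg : ∀ z : ℂ, z.re ∈ [[a, b]] → ‖f z‖ ≤ g |z.im|)
    (ha : Integrable fun y : ℝ => f (a + y * I)) (hb : Integrable fun y : ℝ => f (b + y * I)) :
    ∫ y : ℝ, f (a + y * I) = ∫ y : ℝ, f (b + y * I) := by
  have hside {h : ℝ → ℝ} (hh : ∀ᶠ T in atTop, |h T| = T) :
      Tendsto (fun T => ∫ x in a..b, f (x + h T * I)) atTop (𝓝 0) := by
    refine squeeze_zero_norm' (a := fun T => g T * |b - a|) ?_ (by simpa using hg.mul_const |b - a|)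
    filter_upwards [hh] with T hT
    refine intervalIntegral.norm_integral_le_of_norm_le_const fun x hx => ?_
    simpa [hT] using hfg (x + h T * I) (by simpa using uIoc_subset_uIcc hx)
  have hline {c : ℝ} (hc : Integrable fun y : ℝ => f (c + y * I)) :
      Tendsto (fun T : ℝ => ∫ y in (-T)..T, f (c + y * I)) atTop (𝓝 (∫ y : ℝ, f (c + y * I))) :=
    intervalIntegral_tendsto_integral hc tendsto_neg_atTop_atBot tendsto_id
  have hrect (T : ℝ) : (∫ x in a..b, f (x + (-T : ℝ) * I)) - (∫ x in a..b, f (x + T * I)) +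
      I * (∫ y in (-T)..T, f (b + y * I)) - I * (∫ y in (-T)..T, f (a + y * I)) = 0 := by
    simpa using integral_boundary_rect_eq_zero_of_differentiableOn f ⟨a, -T⟩ ⟨b, T⟩
      (hf.mono fun z hz => hz.1)
  have hbot : Tendsto (fun T : ℝ => ∫ x in a..b, f (x + (-T : ℝ) * I)) atTop (𝓝 0) :=
    hside <| (eventually_ge_atTop 0).mono fun T hT => by rw [abs_neg, abs_of_nonneg hT]
  have htop : Tendsto (fun T : ℝ => ∫ x in a..b, f (x + T * I)) atTop (𝓝 0) :=
    hside <| (eventually_ge_atTop 0).mono fun T hT => abs_of_nonneg hT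
  have hlim := ((hbot.sub htop).add ((hline hb).const_mul I)).sub ((hline ha).const_mul I)
  simp only [hrect, sub_zero, zero_add] at hlim
  have hzero := tendsto_nhds_unique tendsto_const_nhds hlim
  exact (mul_left_cancel₀ I_ne_zero (sub_eq_zero.1 hzero.symm)).symm

theorem integral_eq_integral_Ioi_add_integral_Ioi_comp_neg {f : ℝ → ℂ} (hf : Integrable f) :
    ∫ y, f y = (∫ y in Ioi 0, f y) + ∫ y in Ioi 0, f (-y) := by
  rw [integral_comp_neg_Ioi, neg_zero, add_comm,
    intervalIntegral.integral_Iic_add_Ioi hf.integrableOn hf.integrableOn]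

theorem integral_Ioi_eq_integral_Ioi_comp_inv_mul {K : ℝ} (hK : 0 < K) (f : ℝ → ℂ) :
    ∫ y in Ioi 0, f y = ∫ t in Ioi (0 : ℝ), ((K : ℂ) * (t : ℂ) ^ 2)⁻¹ * f (K * t)⁻¹ := by
  have hmellin := mellin_comp_mul_left (fun t => f t⁻¹) (-1) hK
  rw [mellin_comp_inv, neg_neg, cpow_one, eq_comm, smul_eq_mul,
    ← eq_inv_mul_iff_mul_eq₀ (by exact_mod_cast hK.ne')] at hmellin
  have hone : ∫ y in Ioi 0, f y = mellin f 1 := by simp [mellin]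
  rw [hone, hmellin, mellin, ← integral_const_mul]
  refine setIntegral_congr_fun measurableSet_Ioi fun t _ => ?_
  have hexp : (-1 - 1 : ℂ) = -(2 : ℕ) := by norm_num
  simp only [hexp, cpow_neg, cpow_natCast, smul_eq_mul, mul_inv, mul_assoc]

/-! ### The periodized power -/

/-- The periodization `∑_{k ∈ ℤ} (τ + k)^{-m}` of the power `τ^{-m}`. -/
def latticeSum (m : ℕ) (τ : ℂ) : ℂ := ∑' k : ℤ, 1 / (τ + k) ^ m

theorem latticeSum_neg (m : ℕ) (τ : ℂ) : latticeSum m (-τ) = (-1) ^ m * latticeSum m τ := by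
  rw [latticeSum, latticeSum, ← (Equiv.neg ℤ).tsum_eq, ← tsum_mul_left]
  refine tsum_congr fun k => ?_
  rw [Equiv.neg_apply, Int.cast_neg, ← neg_add, neg_pow (τ + k), one_div, one_div, mul_inv,
    ← inv_pow, inv_neg_one]

theorem latticeSum_add_intCast (m : ℕ) (τ : ℂ) (q : ℤ) :
    latticeSum m (τ + q) = latticeSum m τ := by
  rw [latticeSum, latticeSum, ← (Equiv.addLeft q).tsum_eq (fun k : ℤ => 1 / (τ + k) ^ m)]
  simp [add_assoc]

theorem mul_abs_add_one_le_norm_add_intCast {δ : ℝ} (hδ : 0 ≤ δ) {τ : ℂ}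
    (hτ : τ.re ∈ Icc δ (1 - δ)) (k : ℤ) : δ / 2 * (|(k : ℝ)| + 1) ≤ ‖τ + k‖ := by
  refine le_trans ?_ (abs_re_le_norm _)
  rw [add_re, intCast_re]
  obtain ⟨hle, hge⟩ := hτ
  rcases le_or_gt 0 k with hk | hk
  · have hk' : (0 : ℝ) ≤ k := by exact_mod_cast hk
    rw [abs_of_nonneg hk', abs_of_nonneg (by linarith)]
    nlinarith
  · have hk' : (k : ℝ) ≤ -1 := by exact_mod_cast Int.le_sub_one_of_lt hk
    rw [abs_of_nonpos (by linarith), abs_of_nonpos (by linarith)]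
    nlinarith

theorem norm_one_div_add_intCast_pow_le {δ : ℝ} (hδ : 0 < δ) {τ : ℂ}
    (hτ : τ.re ∈ Icc δ (1 - δ)) (m : ℕ) (k : ℤ) :
    ‖1 / (τ + k) ^ m‖ ≤ ((δ / 2) ^ m)⁻¹ * ((|(k : ℝ)| + 1) ^ m)⁻¹ := by
  rw [norm_div, norm_one, norm_pow, one_div, ← mul_inv, ← mul_pow]
  have := mul_abs_add_one_le_norm_add_intCast hδ.le hτ k
  gcongr

theorem summable_inv_abs_intCast_add_one_pow {m : ℕ} (hm : 2 ≤ m) :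
    Summable fun k : ℤ => ((|(k : ℝ)| + 1) ^ m)⁻¹ := by
  have hnat : Summable fun j : ℕ => (((j : ℝ) + 1) ^ m)⁻¹ := by
    simpa using (summable_nat_add_iff 1).2 (Real.summable_nat_pow_inv.2 hm)
  exact .of_nat_of_neg (by simpa using hnat) (by simpa using hnat)

theorem exists_uIcc_subset_Ioo {a b : ℝ} (ha : a ∈ Ioo 0 1) (hb : b ∈ Ioo 0 1) :
    ∃ δ > 0, [[a, b]] ⊆ Ioo δ (1 - δ) := by
  obtain ⟨δ, hδ, hlt⟩ := exists_between
    (lt_min (lt_min ha.1 hb.1) (sub_pos.2 (max_lt ha.2 hb.2)))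
  exact ⟨δ, hδ, fun c hc => ⟨(lt_min_iff.1 hlt).1.trans_le hc.1,
    hc.2.trans_lt (by linarith [(lt_min_iff.1 hlt).2])⟩⟩

theorem differentiableAt_latticeSum {m : ℕ} (hm : 2 ≤ m) {τ : ℂ} (hτ : τ.re ∈ Ioo 0 1) :
    DifferentiableAt ℂ (latticeSum m) τ := by
  obtain ⟨δ, hδ, hsubset⟩ := exists_uIcc_subset_Ioo hτ hτ
  have hopen : IsOpen (re ⁻¹' Ioo δ (1 - δ)) := isOpen_Ioo.preimage continuous_re
  have hterm (k : ℤ) : DifferentiableOn ℂ (fun z : ℂ => 1 / (z + k) ^ m)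
      (re ⁻¹' Ioo δ (1 - δ)) := fun z hz => by
    have hne : z + k ≠ 0 := norm_pos_iff.1 <| lt_of_lt_of_le (by positivity)
      (mul_abs_add_one_le_norm_add_intCast hδ.le (Ioo_subset_Icc_self hz) k)
    have hpow : DifferentiableAt ℂ (fun z : ℂ => (z + k) ^ m) z := by fun_prop
    exact ((differentiableAt_const 1).div hpow (pow_ne_zero m hne)).differentiableWithinAt
  exact (differentiableOn_tsum_of_summable_norm
    ((summable_inv_abs_intCast_add_one_pow hm).mul_left ((δ / 2) ^ m)⁻¹) hterm hopen
    fun k z hz => norm_one_div_add_intCast_pow_le hδ (Ioo_subset_Icc_self hz) m k).differentiableAt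
    (hopen.mem_nhds (hsubset left_mem_uIcc))

theorem latticeSum_eq_tsum_cexp {m : ℕ} (hm : 1 ≤ m) {τ : ℂ} (hτ : 0 < τ.im) :
    latticeSum (m + 1) τ =
      (-2 * π * I) ^ (m + 1) / m ! * ∑' j : ℕ, (j : ℂ) ^ m * cexp (2 * π * I * τ) ^ j :=
  EisensteinSeries.qExpansion_identity hm ⟨τ, hτ⟩

theorem norm_cexp_two_pi_mul_I_mul (τ : ℂ) : ‖cexp (2 * π * I * τ)‖ = rexp (-2 * π * τ.im) := by
  simp [Complex.norm_exp]

theorem exists_norm_latticeSum_le_of_one_le_im {m : ℕ} (hm : 2 ≤ m) :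
    ∃ C ≥ 0, ∀ τ : ℂ, 1 ≤ τ.im → ‖latticeSum m τ‖ ≤ C * rexp (-2 * π * τ.im) := by
  obtain ⟨m, rfl⟩ := Nat.exists_eq_add_of_le' (show 1 ≤ m by omega)
  let r : ℝ := rexp (-2 * π)
  have hr : ‖r‖ < 1 := by
    rw [Real.norm_of_nonneg (Real.exp_pos _).le, Real.exp_lt_one_iff]
    linarith [Real.pi_pos]
  have hsummable := summable_pow_mul_geometric_of_norm_lt_one m hr
  have hterm {τ : ℂ} (hτ : 1 ≤ τ.im) (j : ℕ) : ‖(j : ℂ) ^ m * cexp (2 * π * I * τ) ^ j‖ ≤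
      (j : ℝ) ^ m * r ^ j * (rexp (2 * π) * rexp (-2 * π * τ.im)) := by
    rw [norm_mul, norm_pow, norm_pow, norm_cexp_two_pi_mul_I_mul, Complex.norm_natCast,
      mul_assoc ((j : ℝ) ^ m)]
    rcases Nat.eq_zero_or_pos j with rfl | hj
    · simp [show m ≠ 0 by omega]
    · simp only [r, ← Real.exp_nat_mul, ← Real.exp_add]
      gcongr
      have hj' : (1 : ℝ) ≤ j := by exact_mod_cast hj
      nlinarith [mul_nonneg Real.pi_pos.le (mul_nonneg (sub_nonneg.2 hj') (sub_nonneg.2 hτ))]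
  refine ⟨‖((-2 * π * I : ℂ) ^ (m + 1) / m ! : ℂ)‖ *
    ((∑' j : ℕ, (j : ℝ) ^ m * r ^ j) * rexp (2 * π)), by positivity, fun τ hτ => ?_⟩
  rw [latticeSum_eq_tsum_cexp (by omega) (by linarith), norm_mul, mul_assoc ‖_‖, mul_assoc (tsum _)]
  gcongr
  exact tsum_of_norm_bounded (hsummable.hasSum.mul_right _) (hterm hτ)

theorem exists_norm_latticeSum_le {δ : ℝ} (hδ : 0 < δ) {m : ℕ} (hm : 2 ≤ m) :
    ∃ C ≥ 0, ∀ τ : ℂ, τ.re ∈ Icc δ (1 - δ) → ‖latticeSum m τ‖ ≤ C * rexp (-|τ.im|) := by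
  obtain ⟨C, hC, hCbound⟩ := exists_norm_latticeSum_le_of_one_le_im hm
  have hC' {τ : ℂ} (hτ : 1 ≤ τ.im) : ‖latticeSum m τ‖ ≤ C * rexp (-τ.im) := by
    refine (hCbound τ hτ).trans ?_
    gcongr
    nlinarith [Real.pi_gt_three]
  let B : ℝ := ∑' k : ℤ, ((δ / 2) ^ m)⁻¹ * ((|(k : ℝ)| + 1) ^ m)⁻¹
  refine ⟨max C (B * rexp 1), le_max_of_le_left hC, fun τ hτ => ?_⟩
  rcases lt_or_ge |τ.im| 1 with him | him
  · calc ‖latticeSum m τ‖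
        ≤ B := tsum_of_norm_bounded
          ((summable_inv_abs_intCast_add_one_pow hm).mul_left _).hasSum
          (norm_one_div_add_intCast_pow_le hδ hτ m)
      _ ≤ B * rexp (1 + -|τ.im|) :=
          le_mul_of_one_le_right (by positivity) (Real.one_le_exp (by linarith))
      _ ≤ max C (B * rexp 1) * rexp (-|τ.im|) := by
          rw [Real.exp_add, ← mul_assoc]
          gcongr
          exact le_max_right _ _
  · refine le_trans ?_ (mul_le_mul_of_nonneg_right (le_max_left _ _) (Real.exp_pos _).le)
    rcases le_abs.1 him with h | h
    · simpa [abs_of_pos (zero_lt_one.trans_le h)] using hC' h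
    · have hneg : τ.im < 0 := by linarith
      simpa [latticeSum_neg, abs_of_neg hneg] using hC' (τ := -τ) (by simpa using h)

/-! ### Moments on vertical lines -/

/-- The moment `∫ L(τ) (x - τ)^k dy` of `L = latticeSum m` along the line `τ = c + iy`; the contour
integral over that line is `I` times this. -/
def latticeMoment (m k : ℕ) (x : ℂ) (c : ℝ) : ℂ :=
  ∫ y : ℝ, latticeSum m (c + y * I) * (x - (c + y * I)) ^ k

theorem one_add_sq_mul_add_pow_le {A y : ℝ} (hA : 1 ≤ A) (hy : 0 ≤ y) (k : ℕ) :
    (1 + y ^ 2) * (A + y) ^ k ≤ (k + 2)! * rexp A * rexp y := by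
  have hexp := Real.pow_div_factorial_le_exp (A + y) (by linarith) (k + 2)
  rw [div_le_iff₀ (by positivity), Real.exp_add] at hexp
  calc (1 + y ^ 2) * (A + y) ^ k ≤ (A + y) ^ 2 * (A + y) ^ k := by gcongr; nlinarith
    _ = (A + y) ^ (k + 2) := by ring
    _ ≤ (k + 2)! * rexp A * rexp y := by linarith

theorem exists_norm_latticeSum_mul_sub_pow_le {m : ℕ} (hm : 2 ≤ m) (k : ℕ) (x : ℂ) {a b : ℝ}
    (ha : a ∈ Ioo 0 1) (hb : b ∈ Ioo 0 1) :
    ∃ C, ∀ τ : ℂ, τ.re ∈ [[a, b]] →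
      ‖latticeSum m τ * (x - τ) ^ k‖ ≤ C * (1 + τ.im ^ 2)⁻¹ := by
  obtain ⟨δ, hδ, hsubset⟩ := exists_uIcc_subset_Ioo ha hb
  obtain ⟨C, hC, hbound⟩ := exists_norm_latticeSum_le hδ hm
  refine ⟨C * ((k + 2)! * rexp (‖x‖ + 1)), fun τ hτ => ?_⟩
  have hre : |τ.re| ≤ 1 := by
    have := hsubset hτ
    rw [abs_of_pos (hδ.trans this.1)]
    linarith [this.2]
  have hsub : ‖x - τ‖ ≤ ‖x‖ + 1 + |τ.im| := by
    linarith [norm_sub_le x τ, norm_le_abs_re_add_abs_im τ]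
  have hpow := one_add_sq_mul_add_pow_le (by linarith [norm_nonneg x] : 1 ≤ ‖x‖ + 1)
    (abs_nonneg τ.im) k
  rw [sq_abs] at hpow
  rw [norm_mul, norm_pow, ← div_eq_mul_inv, le_div_iff₀ (by positivity)]
  calc ‖latticeSum m τ‖ * ‖x - τ‖ ^ k * (1 + τ.im ^ 2)
      ≤ C * rexp (-|τ.im|) * (‖x‖ + 1 + |τ.im|) ^ k * (1 + τ.im ^ 2) := by
        gcongr
        exact hbound τ (Ioo_subset_Icc_self (hsubset hτ))
    _ = C * rexp (-|τ.im|) * ((1 + τ.im ^ 2) * (‖x‖ + 1 + |τ.im|) ^ k) := by ring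
    _ ≤ C * rexp (-|τ.im|) * ((k + 2)! * rexp (‖x‖ + 1) * rexp |τ.im|) := by gcongr
    _ = C * ((k + 2)! * rexp (‖x‖ + 1)) * (rexp (-|τ.im|) * rexp |τ.im|) := by ring
    _ = C * ((k + 2)! * rexp (‖x‖ + 1)) := by rw [← Real.exp_add, neg_add_cancel, Real.exp_zero,
        mul_one]

section Moment

variable {m : ℕ} {c c' : ℝ}

theorem differentiableAt_latticeSum_mul_sub_pow (hm : 2 ≤ m) (k : ℕ) (x : ℂ) {τ : ℂ}
    (hτ : τ.re ∈ Ioo 0 1) : DifferentiableAt ℂ (fun τ => latticeSum m τ * (x - τ) ^ k) τ :=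
  (differentiableAt_latticeSum hm hτ).mul (by fun_prop)

theorem integrable_latticeSum_mul_sub_pow (hm : 2 ≤ m) (k : ℕ) (x : ℂ) (hc : c ∈ Ioo 0 1) :
    Integrable fun y : ℝ => latticeSum m (c + y * I) * (x - (c + y * I)) ^ k := by
  obtain ⟨C, hC⟩ := exists_norm_latticeSum_mul_sub_pow_le hm k x hc hc
  refine (integrable_inv_one_add_sq.const_mul C).mono' (Continuous.aestronglyMeasurable ?_)
    (.of_forall fun y => by simpa using hC (c + y * I) (by simp))
  refine continuous_iff_continuousAt.2 fun y => ?_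
  exact (differentiableAt_latticeSum_mul_sub_pow hm k x (τ := c + y * I)
    (by simpa using hc)).continuousAt.comp (f := fun y : ℝ => (c + y * I : ℂ)) (by fun_prop)

theorem latticeMoment_eq_latticeMoment (hm : 2 ≤ m) (k : ℕ) (x : ℂ) (hc : c ∈ Ioo 0 1)
    (hc' : c' ∈ Ioo 0 1) : latticeMoment m k x c = latticeMoment m k x c' := by
  obtain ⟨C, hC⟩ := exists_norm_latticeSum_mul_sub_pow_le hm k x hc hc'
  refine integral_vertical_eq_of_differentiableOn (f := fun τ => latticeSum m τ * (x - τ) ^ k)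
    (g := fun y => C * (1 + y ^ 2)⁻¹) (fun τ hτ => ?_) ?_ (by simpa only [sq_abs] using hC)
    (integrable_latticeSum_mul_sub_pow hm k x hc)
    (integrable_latticeSum_mul_sub_pow hm k x hc')
  · exact (differentiableAt_latticeSum_mul_sub_pow hm k x
      (ordConnected_Ioo.uIcc_subset hc hc' hτ)).differentiableWithinAt
  · simpa using (tendsto_atTop_add_const_left _ 1
      (tendsto_pow_atTop two_ne_zero)).inv_tendsto_atTop.const_mul C

theorem exists_polynomial_latticeMoment_eq_eval (hm : 2 ≤ m) (k : ℕ) (hc : c ∈ Ioo 0 1) :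
    ∃ p : Polynomial ℂ, ∀ x, latticeMoment m k x c = p.eval x := by
  refine ⟨∑ j ∈ Finset.range (k + 1),
    Polynomial.C (latticeMoment m (k - j) 0 c * k.choose j) * Polynomial.X ^ j, fun x => ?_⟩
  have hexpand (y : ℝ) : latticeSum m (c + y * I) * (x - (c + y * I)) ^ k =
      ∑ j ∈ Finset.range (k + 1), latticeSum m (c + y * I) * (0 - (c + y * I)) ^ (k - j) *
        (k.choose j * x ^ j) := by
    rw [sub_eq_add_neg, add_pow, Finset.mul_sum]
    exact Finset.sum_congr rfl fun j _ => by ring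
  simp only [Polynomial.eval_finsetSum, Polynomial.eval_mul, Polynomial.eval_C,
    Polynomial.eval_pow, Polynomial.eval_X]
  rw [latticeMoment, funext hexpand, integral_finsetSum _ fun j _ =>
    (integrable_latticeSum_mul_sub_pow hm (k - j) 0 hc).mul_const _]
  exact Finset.sum_congr rfl fun j _ => by rw [integral_mul_const, latticeMoment, mul_assoc]

end Moment

/-- The part of `latticeMoment m k x c` coming from the upper half-plane. -/
def upperMoment (m k : ℕ) (x : ℂ) (c : ℝ) : ℂ :=
  ∫ t in Ioi (0 : ℝ), latticeSum m (c + t * I) * (x - (c + t * I)) ^ k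

theorem latticeMoment_eq_upperMoment_add {m : ℕ} (hm : 2 ≤ m) (k : ℕ) (x : ℂ) {c : ℝ}
    (hc : c ∈ Ioo 0 1) :
    latticeMoment m k x c =
      upperMoment m k x c + (-1) ^ (m + k) * upperMoment m k (-x) (-c) := by
  rw [latticeMoment, integral_eq_integral_Ioi_add_integral_Ioi_comp_neg
    (integrable_latticeSum_mul_sub_pow hm k x hc), upperMoment, upperMoment, ← integral_const_mul]
  congr 2 with t
  have hτ : (c + (-t : ℝ) * I : ℂ) = -((-c : ℝ) + t * I) := by push_cast; ring
  rw [hτ, latticeSum_neg, show x - -((-c : ℝ) + t * I) = -(-x - ((-c : ℝ) + t * I)) by ring,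
    neg_pow (-x - _), pow_add]
  ring

theorem upperMoment_add_intCast (m k : ℕ) (x : ℂ) (c : ℝ) (q : ℤ) :
    upperMoment m k (x + q) (c + q) = upperMoment m k x c := by
  rw [upperMoment, upperMoment]
  congr with t
  rw [show ((c + q : ℝ) + t * I : ℂ) = c + t * I + q by push_cast; ring,
    latticeSum_add_intCast, add_sub_add_right_eq_sub]

/-! ### Bernoulli polynomials as moments -/

theorem pow_div_mul_pow_add {K : Type*} [Field K] (b x : K) (m : ℕ) {r : ℕ} (hr : r ≠ 0) :
    x ^ m / (b * x) ^ (m + r) = (b ^ (m + r))⁻¹ * (1 / x ^ r) := by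
  rcases eq_or_ne x 0 with rfl | hx
  · simp [hr]
  · rw [mul_pow, pow_add x, div_eq_mul_inv, mul_inv, mul_inv, mul_left_comm,
      mul_inv_cancel_left₀ (pow_ne_zero m hx), one_div]

theorem hasSum_latticeSum_add_mul_I {m : ℕ} (hm : 1 ≤ m) (c : ℝ) {t : ℝ} (ht : 0 < t) :
    HasSum (fun j : ℕ => (-2 * π * I) ^ (m + 1) / m ! *
      ((j : ℂ) ^ m * fourier j (c : UnitAddCircle)) * rexp (-(2 * π * j) * t))
      (latticeSum (m + 1) (c + t * I)) := by
  have him : (c + t * I : ℂ).im = t := by simp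
  have hq : ‖cexp (2 * π * I * (c + t * I))‖ < 1 := by
    rw [norm_cexp_two_pi_mul_I_mul, him, Real.exp_lt_one_iff]
    nlinarith [mul_pos Real.pi_pos ht]
  rw [latticeSum_eq_tsum_cexp hm (him.symm ▸ ht)]
  refine ((summable_pow_mul_geometric_of_norm_lt_one m hq).hasSum.mul_left _).congr_fun ?_
  intro j
  have hexp : (2 * π * I * (j : ℤ) * c / (1 : ℝ) + ((-(2 * π * j) * t : ℝ) : ℂ)) =
      j * (2 * π * I * (c + t * I)) := by
    push_cast
    linear_combination (-2 * π * j * t : ℂ) * I_sq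
  rw [fourier_coe_apply, ofReal_exp, mul_assoc _ (_ * _), mul_assoc (_ ^ m), ← Complex.exp_add,
    hexp, Complex.exp_nat_mul]

theorem hasSum_mellin_latticeSum {m r : ℕ} (hm : 1 ≤ m) (hr : 1 ≤ r) (c : ℝ) :
    HasSum (fun j : ℕ => (-2 * π * I) ^ (m + 1) / m ! * ((m + r)! / (2 * π) ^ (m + (r + 1))) *
      (1 / (j : ℂ) ^ (r + 1) * fourier j (c : UnitAddCircle)))
      (mellin (fun t => latticeSum (m + 1) (c + t * I)) (m + r + 1)) := by
  have hre : (m + r + 1 : ℂ).re = (m + (r + 1) : ℕ) := by simp [add_assoc]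
  have hmellin := hasSum_mellin (s := m + r + 1) (p := fun j : ℕ => 2 * π * j) (fun j => ?_)
    (by rw [hre]; positivity) (fun t ht => hasSum_latticeSum_add_mul_I hm c ht) ?_
  · refine hmellin.congr_fun fun j => ?_
    have hpow := pow_div_mul_pow_add (2 * π : ℂ) j m (r := r + 1) (by omega)
    rw [show (m + r + 1 : ℂ) = (m + r : ℕ) + 1 by push_cast; ring, Complex.Gamma_nat_eq_factorial,
      ← Nat.cast_add_one, cpow_natCast]
    push_cast
    rw [add_assoc m r 1]
    linear_combination
      -((-2 * π * I) ^ (m + 1) / m ! * (m + r)! * fourier j (c : UnitAddCircle)) * hpow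
  · rcases Nat.eq_zero_or_pos j with rfl | hj
    · exact .inl (by simp [show m ≠ 0 by omega])
    · exact .inr (by positivity)
  · have hsummable : Summable fun j : ℕ => 1 / (j : ℝ) ^ (r + 1) :=
      Real.summable_one_div_nat_pow.2 (by omega)
    refine (hsummable.mul_left (‖((-2 * π * I) ^ (m + 1) / m ! : ℂ)‖ *
      ((2 * π) ^ (m + (r + 1)))⁻¹)).congr fun j => ?_
    rw [hre, Real.rpow_natCast, mul_assoc, ← pow_div_mul_pow_add _ _ _ r.succ_ne_zero, norm_mul,
      norm_mul, norm_pow, fourier_apply, Circle.norm_coe, mul_one, Complex.norm_natCast,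
      mul_div_assoc]

theorem upperMoment_self (m k : ℕ) (c : ℝ) :
    upperMoment m k c c = (-I) ^ k * mellin (fun t => latticeSum m (c + t * I)) (k + 1) := by
  rw [upperMoment, mellin, ← integral_const_mul]
  refine setIntegral_congr_fun measurableSet_Ioi fun t _ => ?_
  simp only [add_sub_cancel_right, cpow_natCast, smul_eq_mul]
  rw [show (c - (c + t * I) : ℂ) = t * -I by ring, mul_pow]
  ring

theorem fourier_coe_neg (j : ℤ) (c : ℝ) :
    fourier j ((-c : ℝ) : UnitAddCircle) = fourier (-j) (c : UnitAddCircle) := by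
  rw [fourier_coe_apply, fourier_coe_apply]
  push_cast
  ring_nf

theorem upperMoment_self_add_upperMoment_neg_self {m r : ℕ} (hm : 1 ≤ m) (hr : 1 ≤ r) {c : ℝ}
    (hc : c ∈ Icc 0 1) :
    upperMoment (m + 1) (m + r) c c + (-1) ^ (r + 1) * upperMoment (m + 1) (m + r) (-c) (-c) =
      (-I) ^ (m + r) * ((-2 * π * I) ^ (m + 1) / m ! * ((m + r)! / (2 * π) ^ (m + (r + 1))) *
        (-(2 * π * I) ^ (r + 1) / (r + 1)! * bernoulliFun (r + 1) c)) := by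
  have hmellin := (hasSum_mellin_latticeSum hm hr c).add
    ((hasSum_mellin_latticeSum hm hr (-c)).mul_left ((-1) ^ (r + 1)))
  have hfourier := (hasSum_one_div_nat_pow_mul_fourier (show 2 ≤ r + 1 by omega) hc).mul_left
    ((-2 * π * I) ^ (m + 1) / m ! * ((m + r)! / (2 * π) ^ (m + (r + 1))) : ℂ)
  rw [← ofReal_neg, upperMoment_self, upperMoment_self, mul_left_comm, ← mul_add, Nat.cast_add,
    hmellin.unique (hfourier.congr_fun fun j => ?_)]
  rw [fourier_coe_neg]
  ring

theorem latticeMoment_self {m r : ℕ} (hm : 1 ≤ m) (hr : 1 ≤ r) {c : ℝ} (hc : c ∈ Ioo 0 1) :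
    latticeMoment (m + 1) (m + r) c c =
      (-1) ^ (m + 1) * 2 * π * (m + r).choose m / (r + 1) * bernoulliFun (r + 1) c := by
  have hsign : (-1 : ℂ) ^ (m + 1 + (m + r)) = (-1) ^ (r + 1) := by
    rw [show m + 1 + (m + r) = 2 * m + (r + 1) by ring, pow_add, pow_mul]
    simp
  have hI : (-I) ^ (m + r) * (-I) ^ (m + 1) * I ^ (r + 1) = (-1) ^ m := by
    have hgroup (z : ℂ) : z ^ (m + r) * z ^ (m + 1) * I ^ (r + 1) =
        (z * z) ^ m * (z * I) ^ (r + 1) := by ring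
    rw [hgroup, neg_mul_neg, neg_mul, I_mul_I, neg_neg, one_pow, mul_one]
  rw [latticeMoment_eq_upperMoment_add (by omega) _ _ hc, hsign,
    upperMoment_self_add_upperMoment_neg_self hm hr (Ioo_subset_Icc_self hc), Nat.cast_add_choose ℂ,
    Nat.factorial_succ, show (-2 * π * I : ℂ) = 2 * π * -I by ring, mul_pow _ (-I), mul_pow _ I]
  have hpi : (2 * π : ℂ) ≠ 0 := by exact_mod_cast Real.two_pi_pos.ne'
  have hr1 : (r + 1 : ℂ) ≠ 0 := by exact_mod_cast r.succ_ne_zero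
  push_cast
  field_simp
  linear_combination (-((2 * π) ^ (m + 1) * (2 * π) ^ (r + 1) * (m + r)! *
    bernoulliFun (r + 1) c / (m ! * r !)) : ℂ) * hI

theorem bpoly_ofReal (k : ℕ) (x : ℝ) : bpoly k x = bernoulliFun k x := by
  rw [bpoly, bernoulliFun, Polynomial.eval_map_algebraMap]
  exact Polynomial.aeval_algebraMap_apply ℂ x (Polynomial.bernoulli k)

theorem latticeMoment_eq_bpoly {m r : ℕ} (hm : 1 ≤ m) (hr : 1 ≤ r) (x : ℂ) {c : ℝ}
    (hc : c ∈ Ioo 0 1) :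
    latticeMoment (m + 1) (m + r) x c =
      (-1) ^ (m + 1) * 2 * π * (m + r).choose m / (r + 1) * bpoly (r + 1) x := by
  obtain ⟨p, hp⟩ := exists_polynomial_latticeMoment_eq_eval (show 2 ≤ m + 1 by omega) (m + r) hc
  let q : Polynomial ℂ := Polynomial.C ((-1) ^ (m + 1) * 2 * π * (m + r).choose m / (r + 1) : ℂ) *
    (Polynomial.bernoulli (r + 1)).map (algebraMap ℚ ℂ)
  have hq (x : ℂ) : q.eval x =
      (-1) ^ (m + 1) * 2 * π * (m + r).choose m / (r + 1) * bpoly (r + 1) x := by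
    simp [q, bpoly]
  have hpq : p = q := by
    refine Polynomial.eq_of_infinite_eval_eq p q (((Ioo_infinite zero_lt_one).image
      (f := ((↑) : ℝ → ℂ)) ofReal_injective.injOn).mono ?_)
    rintro _ ⟨c', hc', rfl⟩
    rw [mem_ofPred_eq, ← hp, hq, bpoly_ofReal, ← latticeMoment_self hm hr hc']
    exact latticeMoment_eq_latticeMoment (by omega) _ _ hc hc'
  rw [hp, hpq, hq]

/-! ### The series `S4` -/

theorem S4_eq_latticeSum {D w n : ℕ} (hD : D ≠ 0) (hn : n ≤ w) (a : ℤ) {z : ℂ} (hz : z ≠ 0) :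
    S4 D w n a z = 2 / (D * z) ^ (w + 2) * latticeSum (w - n + 1) (a / D - 1 / (D ^ 2 * z)) := by
  have hD' : (D : ℂ) ≠ 0 := by exact_mod_cast hD
  rw [S4, latticeSum, div_mul_eq_mul_div, mul_div_assoc, ← tsum_div_const]
  congr 1
  refine tsum_congr fun k => ?_
  have hfactor : ((a : ℂ) + k * D) * z - 1 / D = (D * z) * (a / D - 1 / (D ^ 2 * z) + k) := by
    field_simp
    ring
  rw [hfactor, mul_pow, div_div, show w + 2 = (w - n + 1) + (n + 1) by omega,
    pow_add _ (w - n + 1) (n + 1)]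
  congr 1
  ring

theorem S4_mul_sub_pow {D w n : ℕ} (hD : D ≠ 0) (hn : n ≤ w) (a : ℤ) {X z : ℂ} (hX : X ≠ 0)
    (hz : z ≠ 0) :
    S4 D w n a z * (X - z) ^ w = 2 / (D * z) ^ 2 * (D ^ w * X ^ w) *
      (latticeSum (w - n + 1) (a / D - 1 / (D ^ 2 * z)) *
        (a / D - 1 / (D ^ 2 * X) - (a / D - 1 / (D ^ 2 * z))) ^ w) := by
  have hD' : (D : ℂ) ≠ 0 := by exact_mod_cast hD
  have hsub : X - z = D * z * (D * X * (a / D - 1 / (D ^ 2 * X) - (a / D - 1 / (D ^ 2 * z)))) := by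
    field_simp
    ring
  rw [S4_eq_latticeSum hD hn a hz, hsub, mul_pow (D * z), mul_pow (D * X), mul_pow (D : ℂ) X,
    pow_add _ w 2]
  have hpow : (D * z) ^ w ≠ 0 := pow_ne_zero _ (mul_ne_zero hD' hz)
  field_simp

theorem intI_S4_mul_sub_pow {D w n : ℕ} (hD : D ≠ 0) (hn : n ≤ w) (a : ℤ) {X : ℂ} (hX : X ≠ 0) :
    intI (fun z => S4 D w n a z * (X - z) ^ w) =
      -2 * I * D ^ w * X ^ w *
        upperMoment (w - n + 1) w (a / D - 1 / (D ^ 2 * X)) (a / D) := by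
  have hD' : (D : ℂ) ≠ 0 := by exact_mod_cast hD
  rw [intI, integral_Ioi_eq_integral_Ioi_comp_inv_mul (show (0 : ℝ) < D ^ 2 by positivity),
    show -2 * I * (D : ℂ) ^ w * X ^ w = I * (-2 * (D ^ w * X ^ w)) by ring, mul_assoc I,
    upperMoment, ← integral_const_mul (-2 * ((D : ℂ) ^ w * X ^ w))]
  congr 1
  refine setIntegral_congr_fun measurableSet_Ioi fun t ht => ?_
  have ht' : (t : ℂ) ≠ 0 := by exact_mod_cast (mem_Ioi.1 ht).ne'
  set z : ℂ := I * (((D : ℝ) ^ 2 * t)⁻¹ : ℝ) with hz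
  push_cast at hz
  have hz0 : z ≠ 0 := by simp [hz, hD', ht']
  have hinv : 1 / (D ^ 2 * z) = -(t * I) := by
    rw [hz]
    field_simp
    simp
  have hjacobian : ((((D ^ 2 : ℝ) : ℂ) * t ^ 2)⁻¹ * (2 / (D * z) ^ 2)) = -2 := by
    rw [hz]
    push_cast
    field_simp
    simp
  rw [S4_mul_sub_pow hD hn a hX hz0, hinv, sub_neg_eq_add, ← mul_assoc,
    ← mul_assoc (_⁻¹) (2 / _), hjacobian]
  push_cast
  rfl

theorem intI_const_mul (b : ℂ) (F : ℂ → ℂ) : intI (fun z => b * F z) = b * intI F := by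
  rw [intI, intI, integral_const_mul, mul_left_comm]

theorem intI_S4_neg_mul_add_pow {D w n : ℕ} (hD : D ≠ 0) (hn : n ≤ w) (a : ℤ) {X : ℂ}
    (hX : X ≠ 0) :
    intI (fun z => S4 D w n (-a) z * (X + z) ^ w) =
      -2 * I * D ^ w * X ^ w *
        upperMoment (w - n + 1) w (-(a / D - 1 / (D ^ 2 * X))) (-(a / D)) := by
  have hsign : (-1 : ℂ) ^ w * (-1) ^ w = 1 := by rw [← mul_pow, neg_mul_neg, one_mul, one_pow]
  have hneg (z : ℂ) : S4 D w n (-a) z * (X + z) ^ w =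
      (-1) ^ w * (S4 D w n (-a) z * (-X - z) ^ w) := by
    rw [← neg_add', neg_pow (X + z)]
    linear_combination -(S4 D w n (-a) z * (X + z) ^ w) * hsign
  have hpoint : ((-a : ℤ) / D - 1 / (D ^ 2 * -X) : ℂ) = -(a / D - 1 / (D ^ 2 * X)) := by
    push_cast
    ring
  rw [funext hneg, intI_const_mul, intI_S4_mul_sub_pow hD hn (-a) (neg_ne_zero.2 hX), neg_pow X,
    hpoint, Int.cast_neg, neg_div]
  linear_combination (-2 * I * D ^ w * X ^ w *
    upperMoment (w - n + 1) w (-(a / D - 1 / (D ^ 2 * X))) (-(a / D))) * hsign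

theorem fract_div_mem_Ioo {a : ℤ} {D : ℕ} (hD : D ≠ 0) (ha : ¬ (D : ℤ) ∣ a) :
    Int.fract (a / D : ℝ) ∈ Ioo 0 1 := by
  refine ⟨(Int.fract_nonneg _).lt_of_ne' fun hzero => ha ?_, Int.fract_lt_one _⟩
  obtain ⟨q, hq⟩ := Int.fract_eq_zero_iff.1 hzero
  rw [eq_div_iff (by exact_mod_cast hD)] at hq
  exact ⟨q, by rw [mul_comm]; exact_mod_cast hq.symm⟩

theorem intI_S4_add_intI_S4_neg {D w n : ℕ} (hD : D ≠ 0) (hn0 : 0 < n) (hnw : n < w) {a : ℤ}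
    (ha : ¬ (D : ℤ) ∣ a) {X : ℂ} (hX : X ≠ 0) :
    intI (fun z => S4 D w n a z * (X - z) ^ w) +
        (-1) ^ (n - 1) * intI (fun z => S4 D w n (-a) z * (X + z) ^ w) =
      -2 * I * D ^ w * X ^ w *
        latticeMoment (w - n + 1) w ((Int.fract (a / D : ℝ) : ℝ) - 1 / (D ^ 2 * X))
          (Int.fract (a / D : ℝ)) := by
  have hfloor : (a / D : ℝ) = Int.fract (a / D : ℝ) + ⌊(a / D : ℝ)⌋ :=
    (Int.fract_add_floor _).symm
  have hupper := intI_S4_mul_sub_pow hD hnw.le a hX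
  have hlower := intI_S4_neg_mul_add_pow hD hnw.le a hX
  have hsign : (-1 : ℂ) ^ (w - n + 1 + w) = (-1) ^ (n - 1) := by
    rw [show w - n + 1 + w = 2 * (w - n + 1) + (n - 1) by omega, pow_add, pow_mul]
    simp
  have hc := fract_div_mem_Ioo hD ha
  generalize Int.fract (a / D : ℝ) = c at *
  generalize ⌊(a / D : ℝ)⌋ = q at *
  have hpoint : (a / D - 1 / (D ^ 2 * X) : ℂ) = c - 1 / (D ^ 2 * X) + q := by
    rw [show (a / D : ℂ) = c + q by exact_mod_cast congrArg ((↑) : ℝ → ℂ) hfloor]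
    ring
  rw [hpoint, hfloor, upperMoment_add_intCast] at hupper
  rw [hpoint, hfloor, neg_add, neg_add, ← Int.cast_neg, ← Int.cast_neg, upperMoment_add_intCast]
    at hlower
  rw [hupper, hlower, latticeMoment_eq_upperMoment_add (by omega) _ _ hc, hsign]
  ring

theorem cconst_mul_two_mul_I_pow (w n : ℕ) :
    cconst w n * (2 * I) ^ (w + 1) = (-1) ^ n * 4 * π * I * w.choose n := by
  have hcancel : (2 * I : ℂ) ^ (-(w : ℤ) - 1) * (2 * I) ^ (w + 1) = 1 := by
    rw [← zpow_natCast, ← zpow_add₀ (by simp),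
      show -(w : ℤ) - 1 + (w + 1 : ℕ) = 0 by push_cast; ring, zpow_zero]
  rw [cconst]
  linear_combination (-1) ^ n * 4 * π * I * w.choose n * hcancel

theorem F4_eval_general {D w n : ℕ} (hD : D ≠ 0) (hn0 : 0 < n) (hnw : n < w) {a : ℤ}
    (ha : ¬ (D : ℤ) ∣ a) {X : ℂ} (hX : X ≠ 0) :
    intI (fun z => S4 D w n a z * (X - z) ^ w) +
      (-1 : ℂ) ^ (n - 1) * intI (fun z => S4 D w n (-a) z * (X + z) ^ w) =
    (-1) ^ w * (cconst w n * (2 * I) ^ (w + 1) * (D : ℂ) ^ w * X ^ w *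
      bpoly (n + 1) ((Int.fract ((a : ℝ) / D) : ℝ) - 1 / (D ^ 2 * X)) / (n + 1)) := by
  have hmoment := latticeMoment_eq_bpoly (m := w - n) (by omega) hn0
    ((Int.fract ((a : ℝ) / D) : ℝ) - 1 / (D ^ 2 * X)) (fract_div_mem_Ioo hD ha)
  rw [Nat.sub_add_cancel hnw.le, Nat.choose_symm hnw.le] at hmoment
  have hsign : (-1 : ℂ) ^ (w - n + 1) = -((-1) ^ w * (-1) ^ n) := by
    rw [← pow_add, show w + n = w - n + 2 * n by omega, pow_add, pow_add, pow_mul]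
    simp
  rw [intI_S4_add_intI_S4_neg hD hn0 hnw ha hX, hmoment, hsign, cconst_mul_two_mul_I_pow]
  ring

/-- the twisted period-polynomial contribution of the matrices with
bottom row `±(D, −h)` (for `N ∣ D`): for `0 < n < w`, `gcd(h,D) = 1`, `ah ≡ −1 (mod D)`,
and nonzero `X`,
`F_{4,h}(X) = c_n·(2i)^{w+1}·D^w·X^w·B_{n+1}({a/D} − 1/(D²X))/(n+1)`. -/
theorem F4_eval (N : ℕ) (hN : 1 ≤ N) (w : ℕ) (hw : 2 ≤ w) (hwe : Even w)
    (n : ℕ) (hn0 : 0 < n) (hnw : n < w) (D : ℕ) (hD : 1 < D) (hND : N ∣ D)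
    (h : ℤ) (hh : Int.gcd h D = 1) (a : ℤ) (ha : (D : ℤ) ∣ (a * h + 1))
    (X : ℂ) (hX : X ≠ 0) :
    intI (fun z => S4 D w n a z * (X - z) ^ w) +
      (-1 : ℂ) ^ (n - 1) * intI (fun z => S4 D w n (-a) z * (X + z) ^ w) =
    cconst w n * (2 * Complex.I) ^ (w + 1) * (D : ℂ) ^ w * X ^ w *
      bpoly (n + 1) (((Int.fract ((a : ℝ) / D) : ℝ) : ℂ) - 1 / (D ^ 2 * X)) /
      (n + 1) := by
  have hDa : ¬ (D : ℤ) ∣ a := fun hdvd => by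
    have hone : (D : ℤ) ∣ 1 := (Int.dvd_add_right (hdvd.mul_right h)).1 ha
    exact hD.ne' (Nat.dvd_one.1 (by exact_mod_cast hone))
  simpa only [hwe.neg_one_pow, one_mul] using F4_eval_general (by omega) hn0 hnw hDa hX

end
end

section
/- Let N ≥ 1, let w ≥ 2 be even, let n be an integer with 0 < n < w, set ñ = w − n, let D > 1 and let h be a positive integer. Let S_{5,h}(z) = Σ_{(a b; c d) ∈ Γ₀(N), ac(ah/D+b)(ch/D+d) < 0} 1/((az + ah/D + b)^{ñ+1}·(cz + ch/D + d)^{n+1}) and F_{5,h}(X) = ∫₀^{i∞} S_{5,h}(z)(X−z)^w dz + (−1)^{n−1}·∫₀^{i∞} S_{5,−h}(z)(X+z)^w dz. Then for every complex number X: F_{5,h}(X) = c_n·(2i)^{w+1}·[ −Σ_{(a b; c d) ∈ Γ₀(N), a,c,k,ℓ > 0, D = ka+ℓc, h = −kb−ℓd} (aX − ℓ/D)^n·(cX + k/D)^{ñ} + Σ_{(a b; c d) ∈ Γ₀(N), a,k,ℓ > 0, c < 0, D = ka−ℓc, h = −kb+ℓd} (aX + ℓ/D)^n·(cX + k/D)^{ñ}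 ], where c_n = (−1)^n·4πi·(2i)^{−w−1}·C(w,n). -/
open MeasureTheory Complex Real

noncomputable section

/-- `S_{5,h}(z)`: the sub-sum of the series defining `R_n` over matrices
`(a b; c d) ∈ Γ₀(N)` with `ac(ah/D+b)(ch/D+d) < 0`. -/
def S5 (N D w n : ℕ) (h : ℤ) (z : ℂ) : ℂ :=
  ∑' p : ℤ × ℤ × ℤ × ℤ,
    if p.1 * p.2.2.2 - p.2.1 * p.2.2.1 = 1 ∧ (N : ℤ) ∣ p.2.2.1 ∧
        (p.1 : ℝ) * p.2.2.1 * ((p.1 : ℝ) * h / D + p.2.1) *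
          ((p.2.2.1 : ℝ) * h / D + p.2.2.2) < 0 then
      1 / (((p.1 : ℂ) * z + (p.1 : ℂ) * h / D + p.2.1) ^ (w - n + 1) *
          ((p.2.2.1 : ℂ) * z + (p.2.2.1 : ℂ) * h / D + p.2.2.2) ^ (n + 1))
    else 0

/-!
On the imaginary axis put `T = (az + x)/(cz + y)` with `x = ah/D + b` and `y = ch/D + d`. Since
`ay - cx = 1`, we have `dT = dz/(cz + y)^2` and `X - z = (aX + x)(cz + y) - (cX + y)(az + x)`, so
the summand of `S_{5,h}(z) (X - z)^w dz` attached to a matrix is a Laurent polynomial in `T` times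
`dT`. Over the whole axis every power of `T` other than `T⁻¹` integrates to zero, because `T` tends
to `a/c` at both ends; partial fractions give `∫ dT/T = iπ (sign(ax) - sign(cy))`, and the condition
on the matrices is precisely that this does not vanish.

Conjugation by `(1 0; 0 -1)` turns `S_{5,-h}(z)` into `±S_{5,h}(-z)`, so the two half-line integrals
add up to an integral over the whole axis. The remaining finite sum is invariant under
`γ ↦ -γ`, hence is twice its part with `a > 0`. Finally `D = ka + ℓc`, `h = -kb - ℓd` is a
unimodular system, solved by `k = Dy`, `ℓ = -Dx`.
-/

/-! ### Integration of a Laurent polynomial along the imaginary axis -/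

/-- The affine form `a z + x` on the imaginary axis `z = i s`. The factors in the denominators of
`S_{5,h}` have this shape. -/
def imagAffine (a x s : ℝ) : ℂ := a * (I * s) + x

lemma imagAffine_ne_zero (a : ℝ) {x : ℝ} (hx : x ≠ 0) (s : ℝ) : imagAffine a x s ≠ 0 := by
  intro h
  simpa [imagAffine, hx] using congrArg Complex.re h

@[fun_prop]
lemma continuous_imagAffine (a x : ℝ) : Continuous (imagAffine a x) := by
  unfold imagAffine
  fun_prop

lemma norm_imagAffine_sq (a x s : ℝ) : ‖imagAffine a x s‖ ^ 2 = x ^ 2 + (a * s) ^ 2 := by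
  rw [← normSq_eq_norm_sq, normSq_apply]
  simp only [imagAffine, add_re, add_im, re_ofReal_mul, im_ofReal_mul, I_mul_re, I_mul_im,
    ofReal_re, ofReal_im]
  ring

lemma hasDerivAt_imagAffine (a x s : ℝ) : HasDerivAt (imagAffine a x) (a * I) s :=
  ((((hasDerivAt_id s).ofReal_comp.const_mul I).const_mul (a : ℂ)).add_const
    (x : ℂ)).congr_deriv (by simp)

lemma hasDerivAt_imagAffine_div {a x c y : ℝ} (hdet : a * y - c * x = 1) (hy : y ≠ 0) (s : ℝ) :
    HasDerivAt (fun s => imagAffine a x s / imagAffine c y s)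
      (I * (1 / imagAffine c y s ^ 2)) s := by
  have hdetC : (a : ℂ) * y - c * x = 1 := by exact_mod_cast hdet
  refine ((hasDerivAt_imagAffine a x s).div (hasDerivAt_imagAffine c y s)
    (imagAffine_ne_zero c hy s)).congr_deriv ?_
  rw [mul_one_div]
  congr 1
  unfold imagAffine
  linear_combination I * hdetC

lemma tendsto_imagAffine_div_cocompact (a x : ℝ) {c : ℝ} (hc : c ≠ 0) (y : ℝ) :
    Filter.Tendsto (fun s => imagAffine a x s / imagAffine c y s) (Filter.cocompact ℝ)
      (nhds (a / c)) := by
  have hinv : Filter.Tendsto (fun s : ℝ => (s : ℂ)⁻¹) (Filter.cocompact ℝ) (nhds 0) := by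
    simpa [Function.comp_def, Metric.cobounded_eq_cocompact] using
      (continuous_ofReal.tendsto 0).comp (Filter.tendsto_inv₀_cobounded (α := ℝ))
  have hlim (a x : ℝ) : Filter.Tendsto (fun s : ℝ => (a * I + x * (s : ℂ)⁻¹ : ℂ))
      (Filter.cocompact ℝ) (nhds (a * I)) := by
    simpa using (hinv.const_mul (x : ℂ)).const_add ((a : ℂ) * I)
  have hdiv := (hlim a x).div (hlim c y) (by simp [hc])
  rw [mul_div_mul_right _ _ I_ne_zero] at hdiv
  refine hdiv.congr' ?_
  filter_upwards [(Set.finite_singleton (0 : ℝ)).isCompact.compl_mem_cocompact] with s hs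
  have hs : (s : ℂ) ≠ 0 := by exact_mod_cast hs
  simp only [imagAffine, Pi.div_apply]
  rw [← mul_div_mul_right _ _ hs]
  congr 1 <;> field_simp

lemma integrable_inv_imagAffine_sq {c y : ℝ} (hc : c ≠ 0) (hy : y ≠ 0) :
    Integrable fun s => 1 / imagAffine c y s ^ 2 := by
  have hcont : Continuous fun s => 1 / imagAffine c y s ^ 2 := by
    fun_prop (disch := exact fun s => pow_ne_zero 2 (imagAffine_ne_zero c hy s))
  refine ((integrable_inv_one_add_sq.comp_mul_left' (div_ne_zero hc hy)).const_mul
    (y ^ 2)⁻¹).mono' hcont.aestronglyMeasurable (Filter.Eventually.of_forall fun s => le_of_eq ?_)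
  rw [norm_div, norm_one, norm_pow, norm_imagAffine_sq, ← mul_inv, one_div]
  congr 1
  field_simp

section Moebius

variable {a x c y : ℝ} (ha : a ≠ 0) (hx : x ≠ 0) (hc : c ≠ 0) (hy : y ≠ 0)

include ha hx hc hy

lemma integrable_imagAffine_div_zpow_mul (k : ℤ) :
    Integrable fun s => (imagAffine a x s / imagAffine c y s) ^ k * (1 / imagAffine c y s ^ 2) := by
  have hu := imagAffine_ne_zero a hx
  have hv := imagAffine_ne_zero c hy
  have hcont : Continuous fun s =>
      (imagAffine a x s / imagAffine c y s) ^ k * (1 / imagAffine c y s ^ 2) :=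
    (((continuous_imagAffine a x).div (continuous_imagAffine c y) hv).zpow₀ k
      fun s => Or.inl (div_ne_zero (hu s) (hv s))).mul
      (continuous_const.div ((continuous_imagAffine c y).pow 2) fun s => pow_ne_zero 2 (hv s))
  have hlim := (tendsto_imagAffine_div_cocompact a x hc y).zpow₀ k
    (Or.inl (div_ne_zero (ofReal_ne_zero.2 ha) (ofReal_ne_zero.2 hc)))
  refine hcont.locallyIntegrable.integrable_of_isBigO_cocompact
    ((hlim.isBigO_one ℂ).mul (Asymptotics.isBigO_refl _ _)) ?_
  simpa only [one_mul] using (integrable_inv_imagAffine_sq hc hy).integrableAtFilter _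

lemma integral_imagAffine_div_zpow_mul_eq_zero (hdet : a * y - c * x = 1) {k : ℤ} (hk : k ≠ -1) :
    ∫ s, (imagAffine a x s / imagAffine c y s) ^ k * (1 / imagAffine c y s ^ 2) = 0 := by
  have hk' : ((k + 1 : ℤ) : ℂ) ≠ 0 := Int.cast_ne_zero.2 (by omega)
  have hderiv (s : ℝ) : HasDerivAt
      (fun s => (imagAffine a x s / imagAffine c y s) ^ (k + 1) / ((k + 1 : ℤ) * I))
      ((imagAffine a x s / imagAffine c y s) ^ k * (1 / imagAffine c y s ^ 2)) s := by
    refine (((hasDerivAt_zpow (k + 1) _ (Or.inl (div_ne_zero (imagAffine_ne_zero a hx s)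
      (imagAffine_ne_zero c hy s)))).comp s (hasDerivAt_imagAffine_div hdet hy s)).div_const
      _).congr_deriv ?_
    rw [add_sub_cancel_right]
    field_simp
  have hlim := ((tendsto_imagAffine_div_cocompact a x hc y).zpow₀ (k + 1)
    (Or.inl (div_ne_zero (ofReal_ne_zero.2 ha) (ofReal_ne_zero.2 hc)))).div_const
      (((k + 1 : ℤ) : ℂ) * I)
  rw [integral_of_hasDerivAt_of_tendsto hderiv (integrable_imagAffine_div_zpow_mul ha hx hc hy k)
    (hlim.mono_left atBot_le_cocompact) (hlim.mono_left atTop_le_cocompact), sub_self]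

end Moebius

lemma integral_mul_inv_one_add_mul_sq (r : ℝ) :
    ∫ s : ℝ, r * (1 + (r * s) ^ 2)⁻¹ = π * SignType.sign r := by
  rw [integral_const_mul, Measure.integral_comp_mul_left (fun s : ℝ => (1 + s ^ 2)⁻¹),
    integral_univ_inv_one_add_sq, smul_eq_mul, abs_inv]
  rcases eq_or_ne r 0 with rfl | hr
  · simp
  · have hr' : |r| ≠ 0 := abs_ne_zero.2 hr
    field_simp
    exact (abs_mul_sign r).symm

lemma integral_mul_div_sq_add_mul_sq (a x : ℝ) :
    ∫ s : ℝ, a * x / (x ^ 2 + (a * s) ^ 2) = π * SignType.sign (a * x) := by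
  rcases eq_or_ne x 0 with rfl | hx
  · simp
  · have hsign : SignType.sign (a * x) = SignType.sign (a / x) := by
      rw [show a * x = a / x * x ^ 2 by field_simp, sign_mul, sign_pos (sq_pos_of_ne_zero hx),
        mul_one]
    rw [hsign, ← integral_mul_inv_one_add_mul_sq]
    congr with s
    field_simp

lemma integrable_mul_div_sq_add_mul_sq {a x : ℝ} (ha : a ≠ 0) (hx : x ≠ 0) :
    Integrable fun s : ℝ => a * x / (x ^ 2 + (a * s) ^ 2) := by
  refine ((integrable_inv_imagAffine_sq ha hx).norm.const_mul (a * x)).congr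
    (Filter.Eventually.of_forall fun s => ?_)
  simp only [norm_div, norm_one, norm_pow, norm_imagAffine_sq, mul_one_div]

lemma div_imagAffine_add_div_imagAffine_neg (a : ℝ) {x : ℝ} (hx : x ≠ 0) (s : ℝ) :
    a / imagAffine a x s + a / imagAffine a x (-s) =
      (2 * (a * x / (x ^ 2 + (a * s) ^ 2)) : ℝ) := by
  have hprod : imagAffine a x s * imagAffine a x (-s) = (x ^ 2 + (a * s) ^ 2 : ℝ) := by
    simp only [imagAffine]
    push_cast
    linear_combination (-(a : ℂ) ^ 2 * s ^ 2) * I_sq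
  rw [div_add_div _ _ (imagAffine_ne_zero a hx s) (imagAffine_ne_zero a hx (-s)), hprod]
  simp only [imagAffine]
  push_cast
  ring

lemma one_div_imagAffine_mul_imagAffine {a x c y : ℝ} (hx : x ≠ 0) (hy : y ≠ 0)
    (hdet : a * y - c * x = 1) (s : ℝ) :
    1 / (imagAffine a x s * imagAffine c y s) = a / imagAffine a x s - c / imagAffine c y s := by
  have hdetC : (a : ℂ) * y - c * x = 1 := by exact_mod_cast hdet
  rw [div_sub_div _ _ (imagAffine_ne_zero a hx s) (imagAffine_ne_zero c hy s), ← hdetC]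
  congr 1
  simp only [imagAffine]
  ring

lemma div_zpow_neg_one_mul_one_div_sq (u : ℂ) {v : ℂ} (hv : v ≠ 0) :
    (u / v) ^ (-1 : ℤ) * (1 / v ^ 2) = 1 / (u * v) := by
  rw [zpow_neg_one]
  field_simp

lemma integral_one_div_imagAffine_mul_imagAffine {a x c y : ℝ} (ha : a ≠ 0) (hx : x ≠ 0)
    (hc : c ≠ 0) (hy : y ≠ 0) (hdet : a * y - c * x = 1) :
    ∫ s, 1 / (imagAffine a x s * imagAffine c y s) =
      π * (SignType.sign (a * x) - SignType.sign (c * y)) := by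
  have hint : Integrable fun s => 1 / (imagAffine a x s * imagAffine c y s) := by
    simpa only [div_zpow_neg_one_mul_one_div_sq _ (imagAffine_ne_zero c hy _)] using
      integrable_imagAffine_div_zpow_mul ha hx hc hy (-1)
  have heven (s : ℝ) : 1 / (imagAffine a x s * imagAffine c y s) +
      1 / (imagAffine a x (-s) * imagAffine c y (-s)) =
      ((2 * (a * x / (x ^ 2 + (a * s) ^ 2) - c * y / (y ^ 2 + (c * s) ^ 2)) : ℝ) : ℂ) := by
    rw [one_div_imagAffine_mul_imagAffine hx hy hdet,
      one_div_imagAffine_mul_imagAffine hx hy hdet, sub_add_sub_comm,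
      div_imagAffine_add_div_imagAffine_neg a hx, div_imagAffine_add_div_imagAffine_neg c hy,
      ← ofReal_sub, mul_sub]
  have hreal : ∫ s : ℝ, 2 * (a * x / (x ^ 2 + (a * s) ^ 2) - c * y / (y ^ 2 + (c * s) ^ 2)) =
      2 * (π * SignType.sign (a * x) - π * SignType.sign (c * y)) := by
    rw [integral_const_mul, integral_sub (integrable_mul_div_sq_add_mul_sq ha hx)
      (integrable_mul_div_sq_add_mul_sq hc hy), integral_mul_div_sq_add_mul_sq,
      integral_mul_div_sq_add_mul_sq]
  have hdouble := integral_add hint hint.comp_neg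
  simp only [heven] at hdouble
  rw [integral_neg_eq_self (fun s => 1 / (imagAffine a x s * imagAffine c y s)),
    integral_complex_ofReal, hreal] at hdouble
  have hcast (t : SignType) : ((t : ℝ) : ℂ) = t := SignType.map_cast ofRealHom t
  push_cast [hcast] at hdouble
  linear_combination -hdouble / 2

lemma one_div_mul_mul_pow_eq_sum {u v : ℂ} (hu : u ≠ 0) (hv : v ≠ 0) (A B : ℂ) (m n : ℕ) :
    1 / (u ^ (m + 1) * v ^ (n + 1)) * (A * v - B * u) ^ (m + n) =
      ∑ j ∈ Finset.range (m + n + 1), ((m + n).choose j * A ^ j * (-B) ^ (m + n - j)) *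
        ((u / v) ^ ((n : ℤ) - j - 1) * (1 / v ^ 2)) := by
  rw [sub_eq_add_neg, ← neg_mul, add_pow, Finset.mul_sum]
  refine Finset.sum_congr rfl fun j hj => ?_
  have hj : j ≤ m + n := Nat.lt_succ_iff.1 (Finset.mem_range.1 hj)
  have hu_exp : u ^ (m + n - j) / u ^ (m + 1) = u ^ ((n : ℤ) - j - 1) := by
    rw [← zpow_natCast, ← zpow_natCast, ← zpow_sub₀ hu]
    congr 1
    omega
  have hv_exp : v ^ j / v ^ (n + 1) = v ^ (-((n : ℤ) - j - 1)) * (1 / v ^ 2) := by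
    rw [one_div, ← zpow_natCast, ← zpow_natCast, ← zpow_natCast, ← zpow_neg, ← zpow_sub₀ hv,
      ← zpow_add₀ hv]
    congr 1
    omega
  calc _ = (m + n).choose j * A ^ j * (-B) ^ (m + n - j) *
        (u ^ (m + n - j) / u ^ (m + 1) * (v ^ j / v ^ (n + 1))) := by ring
    _ = _ := by rw [hu_exp, hv_exp, div_zpow, zpow_neg]; ring

/-- The rational function `(X - z) ^ (m + n) / ((a z + x) ^ (m + 1) (c z + y) ^ (n + 1))` on the
imaginary axis `z = i s`. Its integrals are the individual contributions to `F_{5,h}(X)`. -/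
def periodIntegrand (X : ℂ) (a x c y : ℝ) (m n : ℕ) (s : ℝ) : ℂ :=
  1 / (imagAffine a x s ^ (m + 1) * imagAffine c y s ^ (n + 1)) * (X - I * s) ^ (m + n)

section PeriodIntegrand

variable (X : ℂ) {a x c y : ℝ} (ha : a ≠ 0) (hx : x ≠ 0) (hc : c ≠ 0) (hy : y ≠ 0)
  (hdet : a * y - c * x = 1) (m n : ℕ)

include hx hy hdet in
lemma periodIntegrand_eq_sum (s : ℝ) :
    periodIntegrand X a x c y m n s =
      ∑ j ∈ Finset.range (m + n + 1),
        ((m + n).choose j * (a * X + x) ^ j * (-(c * X + y)) ^ (m + n - j)) *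
          ((imagAffine a x s / imagAffine c y s) ^ ((n : ℤ) - j - 1) *
            (1 / imagAffine c y s ^ 2)) := by
  have hdetC : (a : ℂ) * y - c * x = 1 := by exact_mod_cast hdet
  have hX : X - I * s = (a * X + x) * imagAffine c y s - (c * X + y) * imagAffine a x s := by
    simp only [imagAffine]
    linear_combination (-X + I * s) * hdetC
  rw [periodIntegrand, hX,
    one_div_mul_mul_pow_eq_sum (imagAffine_ne_zero a hx s) (imagAffine_ne_zero c hy s)]

include ha hx hc hy hdet

lemma integrable_periodIntegrand : Integrable (periodIntegrand X a x c y m n) := by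
  rw [show periodIntegrand X a x c y m n = _ from
    funext (periodIntegrand_eq_sum X hx hy hdet m n)]
  exact integrable_finsetSum _ fun j _ =>
    (integrable_imagAffine_div_zpow_mul ha hx hc hy _).const_mul _

lemma integral_periodIntegrand :
    ∫ s, periodIntegrand X a x c y m n s =
      π * (SignType.sign (a * x) - SignType.sign (c * y)) *
        ((-1) ^ m * (m + n).choose n * ((a * X + x) ^ n * (c * X + y) ^ m)) := by
  simp only [periodIntegrand_eq_sum X hx hy hdet]
  rw [integral_finsetSum _ fun j _ =>
      (integrable_imagAffine_div_zpow_mul ha hx hc hy _).const_mul _,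
    Finset.sum_eq_single_of_mem n (Finset.mem_range.2 (by omega))]
  · simp only [sub_self, zero_sub,
      div_zpow_neg_one_mul_one_div_sq _ (imagAffine_ne_zero c hy _)]
    rw [integral_const_mul, integral_one_div_imagAffine_mul_imagAffine ha hx hc hy hdet,
      Nat.add_sub_cancel, neg_pow]
    ring
  · intro j _ hj
    rw [integral_const_mul,
      integral_imagAffine_div_zpow_mul_eq_zero ha hx hc hy hdet (by omega), mul_zero]

end PeriodIntegrand

/-! ### Matrices with poles on opposite sides of the axis -/

/-- The integer `D (a h / D + b)`: the entry `a h / D + b` of `(a b; c d) (1 h/D; 0 1)` with its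
denominator cleared. The parameters `k`, `ℓ` of the theorem are of this form up to sign. -/
def shiftedEntry (D : ℕ) (h a b : ℤ) : ℤ := a * h + b * D

lemma shiftedEntry_neg_neg (D : ℕ) (h a b : ℤ) :
    shiftedEntry D h (-a) (-b) = -shiftedEntry D h a b := by
  simp only [shiftedEntry]
  ring

lemma shiftedEntry_neg_shift_neg_left (D : ℕ) (h a b : ℤ) :
    shiftedEntry D (-h) (-a) b = shiftedEntry D h a b := by
  simp only [shiftedEntry]
  ring

lemma shiftedEntry_neg_shift_neg_right (D : ℕ) (h a b : ℤ) :
    shiftedEntry D (-h) a (-b) = -shiftedEntry D h a b := by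
  simp only [shiftedEntry]
  ring

lemma shiftedEntry_div {K : Type*} [DivisionRing K] {D : ℕ} (hD : (D : K) ≠ 0) (h a b : ℤ) :
    (shiftedEntry D h a b : K) / D = a * h / D + b := by
  simp [shiftedEntry, add_div, hD]

lemma mul_shiftedEntry_sub (D : ℕ) (h : ℤ) {a b c d : ℤ} (hdet : a * d - b * c = 1) :
    a * shiftedEntry D h c d - c * shiftedEntry D h a b = D := by
  simp only [shiftedEntry]
  linear_combination (D : ℤ) * hdet

lemma linear_relations_iff (D : ℕ) (h : ℤ) {a b c d : ℤ} (hdet : a * d - b * c = 1) (k l : ℤ) :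
    ((D : ℤ) = k * a + l * c ∧ h = -(k * b) - l * d) ↔
      k = shiftedEntry D h c d ∧ l = -shiftedEntry D h a b := by
  simp only [shiftedEntry]
  constructor
  · rintro ⟨hD, hh⟩
    exact ⟨by linear_combination -c * hh - d * hD - k * hdet,
      by linear_combination a * hh + b * hD - l * hdet⟩
  · rintro ⟨rfl, rfl⟩
    exact ⟨by linear_combination -(D : ℤ) * hdet, by linear_combination -h * hdet⟩

lemma mul_neg_iff_of_lt {R : Type*} [Ring R] [LinearOrder R] [IsStrictOrderedRing R] {s t : R}
    (hts : t < s) : s * t < 0 ↔ 0 < s ∧ t < 0 := by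
  rw [mul_neg_iff, or_iff_left]
  exact fun hst => (hst.1.trans hst.2).not_gt hts

/-- The matrices `(a b; c d) ∈ Γ₀(N)`, written `(a, b, c, d)`, for which the poles
`-(ah/D + b)/a` and `-(ch/D + d)/c` of the summand of `S_{5,h}` have opposite signs. As
`a(ch/D + d) - c(ah/D + b) = 1`, this is the condition `ac(ah/D + b)(ch/D + d) < 0`. -/
def oppositePoleMatrices (N D : ℕ) (h : ℤ) : Set (ℤ × ℤ × ℤ × ℤ) :=
  {p | p.1 * p.2.2.2 - p.2.1 * p.2.2.1 = 1 ∧ (N : ℤ) ∣ p.2.2.1 ∧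
    0 < p.1 * shiftedEntry D h p.2.2.1 p.2.2.2 ∧ p.2.2.1 * shiftedEntry D h p.1 p.2.1 < 0}

lemma mem_oppositePoleMatrices_iff_real (N : ℕ) {D : ℕ} (hD : 0 < D) (h : ℤ) (a b c d : ℤ) :
    (a, b, c, d) ∈ oppositePoleMatrices N D h ↔
      a * d - b * c = 1 ∧ (N : ℤ) ∣ c ∧
        (a : ℝ) * c * ((a : ℝ) * h / D + b) * ((c : ℝ) * h / D + d) < 0 := by
  refine and_congr_right fun hdet => and_congr_right fun _ => ?_
  have hD' : (0 : ℝ) < D := Nat.cast_pos.2 hD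
  have hlt : c * shiftedEntry D h a b < a * shiftedEntry D h c d := by
    linarith [mul_shiftedEntry_sub D h hdet, Int.natCast_pos.2 hD]
  have hprod : (a : ℝ) * c * ((a : ℝ) * h / D + b) * ((c : ℝ) * h / D + d) =
      ((a * shiftedEntry D h c d * (c * shiftedEntry D h a b) : ℤ) : ℝ) / D ^ 2 := by
    rw [← shiftedEntry_div hD'.ne', ← shiftedEntry_div hD'.ne']
    push_cast
    ring
  rw [hprod, div_lt_iff₀ (by positivity), zero_mul, Int.cast_lt_zero, mul_neg_iff_of_lt hlt]

lemma finite_oppositePoleMatrices (N D : ℕ) [NeZero D] (h : ℤ) :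
    (oppositePoleMatrices N D h).Finite := by
  let φ : ℤ × ℤ × ℤ × ℤ → ℤ × ℤ × ℤ × ℤ := fun p =>
    (p.1, shiftedEntry D h p.2.2.1 p.2.2.2, p.2.2.1, shiftedEntry D h p.1 p.2.1)
  have hφ : Function.Injective φ := by
    rintro ⟨a, b, c, d⟩ ⟨a', b', c', d'⟩ heq
    simp only [φ, shiftedEntry, Prod.mk.injEq] at heq
    obtain ⟨rfl, hd, rfl, hb⟩ := heq
    simpa [NeZero.ne] using And.intro hb hd
  have hbox := Set.finite_Icc (-D : ℤ) D
  refine ((hbox.prod (hbox.prod (hbox.prod hbox))).preimage hφ.injOn).subset ?_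
  rintro ⟨a, b, c, d⟩ ⟨hdet, -, haY, hcX⟩
  have hsub := mul_shiftedEntry_sub D h hdet
  have hfactors {u v : ℤ} (hne : u * v ≠ 0) (hle : |u * v| ≤ D) :
      u ∈ Set.Icc (-D : ℤ) D ∧ v ∈ Set.Icc (-D : ℤ) D := by
    rw [abs_mul] at hle
    exact ⟨abs_le.1 ((le_mul_of_one_le_right (abs_nonneg u)
      (Int.one_le_abs (right_ne_zero_of_mul hne))).trans hle),
      abs_le.1 ((le_mul_of_one_le_left (abs_nonneg v)
      (Int.one_le_abs (left_ne_zero_of_mul hne))).trans hle)⟩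
  simp only at haY hcX
  obtain ⟨ha, hY⟩ := hfactors haY.ne' (by rw [abs_of_pos haY]; linarith)
  obtain ⟨hc, hX⟩ := hfactors hcX.ne (by rw [abs_of_neg hcX]; linarith)
  exact ⟨ha, hY, hc, hX⟩

/-- `oppositePoleMatrices` as a `Finset`, over which the series `S5` becomes a finite sum. -/
def oppositePoleFinset (N D : ℕ) [NeZero D] (h : ℤ) : Finset (ℤ × ℤ × ℤ × ℤ) :=
  (finite_oppositePoleMatrices N D h).toFinset

lemma mem_oppositePoleFinset {N D : ℕ} [NeZero D] {h : ℤ} {p : ℤ × ℤ × ℤ × ℤ} :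
    p ∈ oppositePoleFinset N D h ↔ p ∈ oppositePoleMatrices N D h :=
  (finite_oppositePoleMatrices N D h).mem_toFinset

lemma neg_mem_oppositePoleFinset {N D : ℕ} [NeZero D] {h : ℤ} {p : ℤ × ℤ × ℤ × ℤ}
    (hp : p ∈ oppositePoleFinset N D h) : -p ∈ oppositePoleFinset N D h := by
  simpa [mem_oppositePoleFinset, oppositePoleMatrices, shiftedEntry_neg_neg] using hp

/-! ### Gluing the two half-line integrals -/

/-- The summand of `S_{5,h}` at the matrix `p = (a, b, c, d)`, with `ñ = m`. -/
def s5Summand (D m n : ℕ) (h : ℤ) (p : ℤ × ℤ × ℤ × ℤ) (z : ℂ) : ℂ :=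
  1 / ((p.1 * z + shiftedEntry D h p.1 p.2.1 / D) ^ (m + 1) *
    (p.2.2.1 * z + shiftedEntry D h p.2.2.1 p.2.2.2 / D) ^ (n + 1))

lemma S5_eq_sum (N D : ℕ) [NeZero D] (m n : ℕ) (h : ℤ) (z : ℂ) :
    S5 N D (m + n) n h z = ∑ p ∈ oppositePoleFinset N D h, s5Summand D m n h p z := by
  have hD : (D : ℂ) ≠ 0 := NeZero.ne _
  rw [S5, tsum_eq_sum (s := oppositePoleFinset N D h)]
  · refine Finset.sum_congr rfl fun p hp => ?_
    rw [if_pos ((mem_oppositePoleMatrices_iff_real N (NeZero.pos D) h _ _ _ _).1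
      (mem_oppositePoleFinset.1 hp)), Nat.add_sub_cancel, s5Summand, shiftedEntry_div hD,
      shiftedEntry_div hD, add_assoc, add_assoc]
  · exact fun p hp => if_neg fun hq => hp (mem_oppositePoleFinset.2
      ((mem_oppositePoleMatrices_iff_real N (NeZero.pos D) h _ _ _ _).2 hq))

/-- Conjugation of `(a b; c d)` by `(1 0; 0 -1)`. It matches the summands of `S_{5,-h}(z)` with
those of `S_{5,h}(-z)`. -/
def reflect : Equiv.Perm (ℤ × ℤ × ℤ × ℤ) where
  toFun p := (p.1, -p.2.1, -p.2.2.1, p.2.2.2)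
  invFun p := (p.1, -p.2.1, -p.2.2.1, p.2.2.2)
  left_inv p := by simp
  right_inv p := by simp

lemma reflect_apply (p : ℤ × ℤ × ℤ × ℤ) : reflect p = (p.1, -p.2.1, -p.2.2.1, p.2.2.2) :=
  rfl

lemma reflect_mem_oppositePoleFinset {N D : ℕ} [NeZero D] {h : ℤ} {p : ℤ × ℤ × ℤ × ℤ} :
    reflect p ∈ oppositePoleFinset N D (-h) ↔ p ∈ oppositePoleFinset N D h := by
  simp [mem_oppositePoleFinset, oppositePoleMatrices, reflect_apply,
    shiftedEntry_neg_shift_neg_left, shiftedEntry_neg_shift_neg_right]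

lemma s5Summand_reflect (D m n : ℕ) (h : ℤ) (p : ℤ × ℤ × ℤ × ℤ) (z : ℂ) :
    s5Summand D m n (-h) (reflect p) z = (-1) ^ (m + 1) * s5Summand D m n h p (-z) := by
  obtain ⟨a, b, c, d⟩ := p
  simp only [s5Summand, reflect_apply, shiftedEntry_neg_shift_neg_left,
    shiftedEntry_neg_shift_neg_right]
  push_cast
  have hnum (x : ℂ) : a * z + -x / D = -(a * -z + x / D) := by ring
  rw [hnum, neg_pow, neg_mul_comm, mul_assoc, one_div, mul_inv, ← inv_pow, inv_neg_one, one_div]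

lemma neg_one_pow_mul_S5_neg (N D : ℕ) [NeZero D] {m n : ℕ} (hmn : Even (m + n)) (h : ℤ) (z : ℂ) :
    (-1) ^ (n + 1) * S5 N D (m + n) n (-h) z = S5 N D (m + n) n h (-z) := by
  have hsign : (-1 : ℂ) ^ (n + 1) * (-1) ^ (m + 1) = 1 := by
    rw [← pow_add, Even.neg_one_pow (by grind)]
  rw [S5_eq_sum, S5_eq_sum, Finset.mul_sum]
  refine (Finset.sum_equiv reflect (fun p => reflect_mem_oppositePoleFinset.symm)
    fun p _ => ?_).symm
  rw [s5Summand_reflect, ← mul_assoc, hsign, one_mul]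

lemma intI_add_intI_neg {G : ℂ → ℂ} (hG : Integrable fun s : ℝ => G (I * s)) :
    intI G + intI (fun z => G (-z)) = I * ∫ s : ℝ, G (I * s) := by
  have hneg : ∫ s in Set.Ioi (0 : ℝ), G (-(I * s)) = ∫ s in Set.Iic (0 : ℝ), G (I * s) := by
    simpa using integral_comp_neg_Ioi 0 fun s : ℝ => G (I * s)
  rw [intI, intI, hneg, ← mul_add, add_comm,
    intervalIntegral.integral_Iic_add_Ioi hG.integrableOn hG.integrableOn]

/-- The polynomial `(aX + ah/D + b) ^ n (cX + ch/D + d) ^ m` in `X` that the matrix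
`p = (a, b, c, d)` contributes to `F_{5,h}(X)`. -/
def periodMonomial (D m n : ℕ) (h : ℤ) (X : ℂ) (p : ℤ × ℤ × ℤ × ℤ) : ℂ :=
  (p.1 * X + shiftedEntry D h p.1 p.2.1 / D) ^ n *
    (p.2.2.1 * X + shiftedEntry D h p.2.2.1 p.2.2.2 / D) ^ m

lemma periodMonomial_neg (D : ℕ) {m n : ℕ} (hmn : Even (m + n)) (h : ℤ) (X : ℂ)
    (p : ℤ × ℤ × ℤ × ℤ) : periodMonomial D m n h X (-p) = periodMonomial D m n h X p := by
  have hneg (a x : ℂ) : -a * X + -x / D = -(a * X + x / D) := by ring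
  have hsign : (-1 : ℂ) ^ n * (-1) ^ m = 1 := by rw [← pow_add, add_comm, hmn.neg_one_pow]
  simp only [periodMonomial, Prod.fst_neg, Prod.snd_neg, shiftedEntry_neg_neg, Int.cast_neg, hneg]
  rw [neg_pow, neg_pow _ m, mul_mul_mul_comm, hsign, one_mul]

lemma sign_mul_sub_sign_mul {R : Type*} [Ring R] [LinearOrder R] [IsStrictOrderedRing R]
    {S : Type*} [Ring S] {a c x y : R} (hay : 0 < a * y) (hcx : c * x < 0) :
    (SignType.sign (a * x) - SignType.sign (c * y) : S) = -2 * SignType.sign (a * c) := by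
  rcases mul_pos_iff.1 hay with ⟨ha, hy⟩ | ⟨ha, hy⟩ <;>
    rcases mul_neg_iff.1 hcx with ⟨hc, hx⟩ | ⟨hc, hx⟩ <;>
    simp [sign_mul, ha, hc, hx, hy] <;> norm_num

lemma s5Summand_mul_pow (D m n : ℕ) (h : ℤ) (p : ℤ × ℤ × ℤ × ℤ) (X : ℂ) (s : ℝ) :
    s5Summand D m n h p (I * s) * (X - I * s) ^ (m + n) =
      periodIntegrand X p.1 (shiftedEntry D h p.1 p.2.1 / D) p.2.2.1
        (shiftedEntry D h p.2.2.1 p.2.2.2 / D) m n s := by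
  simp [s5Summand, periodIntegrand, imagAffine]

lemma shiftedEntry_div_of_mem_oppositePoleFinset {N D : ℕ} [NeZero D] {h : ℤ}
    {p : ℤ × ℤ × ℤ × ℤ} (hp : p ∈ oppositePoleFinset N D h) :
    (p.1 : ℝ) * (shiftedEntry D h p.2.2.1 p.2.2.2 / D) -
        p.2.2.1 * (shiftedEntry D h p.1 p.2.1 / D) = 1 ∧
      0 < (p.1 : ℝ) * (shiftedEntry D h p.2.2.1 p.2.2.2 / D) ∧
      (p.2.2.1 : ℝ) * (shiftedEntry D h p.1 p.2.1 / D) < 0 := by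
  obtain ⟨hdet, -, hpos, hneg⟩ := mem_oppositePoleFinset.1 hp
  have hD : (0 : ℝ) < D := Nat.cast_pos.2 (NeZero.pos D)
  simp only [← mul_div_assoc]
  refine ⟨?_, div_pos (mod_cast hpos) hD, div_neg_of_neg_of_pos (mod_cast hneg) hD⟩
  rw [← sub_div, div_eq_one_iff_eq hD.ne']
  exact_mod_cast mul_shiftedEntry_sub D h hdet

section Integral

variable {N D : ℕ} [NeZero D] {h : ℤ} {p : ℤ × ℤ × ℤ × ℤ}
  (hp : p ∈ oppositePoleFinset N D h) (m n : ℕ) (X : ℂ)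

include hp

lemma integrable_s5Summand_mul_pow :
    Integrable fun s : ℝ => s5Summand D m n h p (I * s) * (X - I * s) ^ (m + n) := by
  obtain ⟨hdet, hpos, hneg⟩ := shiftedEntry_div_of_mem_oppositePoleFinset hp
  simp only [s5Summand_mul_pow]
  exact integrable_periodIntegrand X (left_ne_zero_of_mul hpos.ne') (right_ne_zero_of_mul hneg.ne)
    (left_ne_zero_of_mul hneg.ne) (right_ne_zero_of_mul hpos.ne') hdet m n

lemma integral_s5Summand_mul_pow :
    ∫ s : ℝ, s5Summand D m n h p (I * s) * (X - I * s) ^ (m + n) =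
      -2 * π * (-1) ^ m * (m + n).choose n *
        (SignType.sign (p.1 * p.2.2.1) * periodMonomial D m n h X p) := by
  obtain ⟨hdet, hpos, hneg⟩ := shiftedEntry_div_of_mem_oppositePoleFinset hp
  simp only [s5Summand_mul_pow]
  rw [integral_periodIntegrand X (left_ne_zero_of_mul hpos.ne') (right_ne_zero_of_mul hneg.ne)
    (left_ne_zero_of_mul hneg.ne) (right_ne_zero_of_mul hpos.ne') hdet m n,
    sign_mul_sub_sign_mul hpos hneg, ← Int.cast_mul, _root_.sign_intCast, periodMonomial]
  push_cast
  ring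

end Integral

lemma intI_S5_add_intI_S5_neg (N D : ℕ) [NeZero D] {m n : ℕ} (hmn : Even (m + n)) (h : ℤ) (X : ℂ) :
    intI (fun z => S5 N D (m + n) n h z * (X - z) ^ (m + n)) +
        (-1) ^ (n + 1) * intI (fun z => S5 N D (m + n) n (-h) z * (X + z) ^ (m + n)) =
      I * ∑ p ∈ oppositePoleFinset N D h,
        ∫ s : ℝ, s5Summand D m n h p (I * s) * (X - I * s) ^ (m + n) := by
  set G : ℂ → ℂ := fun z => S5 N D (m + n) n h z * (X - z) ^ (m + n) with hG
  have hreflect : (-1) ^ (n + 1) * intI (fun z => S5 N D (m + n) n (-h) z * (X + z) ^ (m + n)) =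
      intI fun z => G (-z) := by
    rw [intI, intI, mul_left_comm, ← integral_const_mul]
    simp only [hG, ← mul_assoc, neg_one_pow_mul_S5_neg N D hmn, sub_neg_eq_add]
  have hsum (s : ℝ) : G (I * s) = ∑ p ∈ oppositePoleFinset N D h,
      s5Summand D m n h p (I * s) * (X - I * s) ^ (m + n) := by
    rw [hG, ← Finset.sum_mul, ← S5_eq_sum]
  have hint (p) (hp : p ∈ oppositePoleFinset N D h) := integrable_s5Summand_mul_pow hp m n X
  rw [hreflect, intI_add_intI_neg (by simpa only [hsum] using integrable_finsetSum _ hint)]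
  simp only [hsum]
  rw [integral_finsetSum _ hint]

/-! ### The sums over `k` and `ℓ` -/

lemma sum_eq_two_mul_sum_filter_pos {α R : Type*} [InvolutiveNeg α] [NonAssocSemiring R]
    {G : Type*} [AddCommGroup G] [LinearOrder G] [IsOrderedAddMonoid G] {S : Finset α}
    (hS : ∀ p ∈ S, -p ∈ S) {u : α → G} (hu : ∀ p, u (-p) = -u p)
    (hu0 : ∀ p ∈ S, u p ≠ 0) {f : α → R} (hf : ∀ p, f (-p) = f p) :
    ∑ p ∈ S, f p = 2 * ∑ p ∈ S with 0 < u p, f p := by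
  rw [← Finset.sum_filter_add_sum_filter_not S (fun p => 0 < u p), two_mul]
  congr 1
  refine Finset.sum_equiv (Equiv.neg α) (fun p => ?_) fun p _ => (hf p).symm
  simp only [Finset.mem_filter, Equiv.neg_apply, hu]
  exact ⟨fun ⟨hp, hle⟩ => ⟨hS p hp, neg_pos.2 ((not_lt.1 hle).lt_of_ne (hu0 p hp))⟩,
    fun ⟨hp, hlt⟩ => ⟨neg_neg p ▸ hS _ hp, (neg_pos.1 hlt).not_gt⟩⟩

/-- The matrices of `oppositePoleMatrices` with `a, c > 0`, indexing the first sum of the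
theorem. -/
def posPosFinset (N D : ℕ) [NeZero D] (h : ℤ) : Finset (ℤ × ℤ × ℤ × ℤ) :=
  {p ∈ oppositePoleFinset N D h | 0 < p.1 ∧ 0 < p.2.2.1}

/-- The matrices of `oppositePoleMatrices` with `a > 0 > c`, indexing the second sum of the
theorem. -/
def posNegFinset (N D : ℕ) [NeZero D] (h : ℤ) : Finset (ℤ × ℤ × ℤ × ℤ) :=
  {p ∈ oppositePoleFinset N D h | 0 < p.1 ∧ p.2.2.1 < 0}

lemma mem_posPosFinset {N D : ℕ} [NeZero D] {h a b c d : ℤ} :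
    (a, b, c, d) ∈ posPosFinset N D h ↔ a * d - b * c = 1 ∧ (N : ℤ) ∣ c ∧ 0 < a ∧ 0 < c ∧
      0 < shiftedEntry D h c d ∧ 0 < -shiftedEntry D h a b := by
  simp only [posPosFinset, Finset.mem_filter, mem_oppositePoleFinset, oppositePoleMatrices,
    Set.mem_ofPred_eq, neg_pos]
  constructor
  · rintro ⟨⟨hdet, hN, hY, hX⟩, ha, hc⟩
    exact ⟨hdet, hN, ha, hc, (mul_pos_iff_of_pos_left ha).1 hY, neg_of_mul_neg_right hX hc.le⟩
  · rintro ⟨hdet, hN, ha, hc, hY, hX⟩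
    exact ⟨⟨hdet, hN, mul_pos ha hY, mul_neg_of_pos_of_neg hc hX⟩, ha, hc⟩

lemma mem_posNegFinset {N D : ℕ} [NeZero D] {h a b c d : ℤ} :
    (a, b, c, d) ∈ posNegFinset N D h ↔ a * d - b * c = 1 ∧ (N : ℤ) ∣ c ∧ 0 < a ∧ c < 0 ∧
      0 < shiftedEntry D h c d ∧ 0 < shiftedEntry D h a b := by
  simp only [posNegFinset, Finset.mem_filter, mem_oppositePoleFinset, oppositePoleMatrices,
    Set.mem_ofPred_eq]
  constructor
  · rintro ⟨⟨hdet, hN, hY, hX⟩, ha, hc⟩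
    exact ⟨hdet, hN, ha, hc, (mul_pos_iff_of_pos_left ha).1 hY, pos_of_mul_neg_right hX hc.le⟩
  · rintro ⟨hdet, hN, ha, hc, hY, hX⟩
    exact ⟨⟨hdet, hN, mul_pos ha hY, mul_neg_of_neg_of_pos hc hX⟩, ha, hc⟩

lemma sum_sign_mul_eq (N D : ℕ) [NeZero D] (h : ℤ) {f : ℤ × ℤ × ℤ × ℤ → ℂ}
    (hf : ∀ p, f (-p) = f p) :
    ∑ p ∈ oppositePoleFinset N D h, SignType.sign (p.1 * p.2.2.1) * f p =
      2 * (∑ p ∈ posPosFinset N D h, f p - ∑ p ∈ posNegFinset N D h, f p) := by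
  have ha (p) (hp : p ∈ oppositePoleFinset N D h) : p.1 ≠ 0 :=
    left_ne_zero_of_mul (mem_oppositePoleFinset.1 hp).2.2.1.ne'
  have hc (p) (hp : p ∈ oppositePoleFinset N D h) : p.2.2.1 ≠ 0 :=
    left_ne_zero_of_mul (mem_oppositePoleFinset.1 hp).2.2.2.ne
  rw [sum_eq_two_mul_sum_filter_pos (u := Prod.fst) (fun p hp => neg_mem_oppositePoleFinset hp)
    (fun p => rfl) ha fun p => by simp [hf]]
  simp only [posPosFinset, posNegFinset, Finset.sum_filter, ← Finset.sum_sub_distrib]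
  congr 1
  refine Finset.sum_congr rfl fun p hp => ?_
  by_cases hpa : 0 < p.1
  · rcases (hc p hp).lt_or_gt with hpc | hpc <;> simp [sign_mul, hpa, hpc, hpc.not_gt]
  · simp [hpa]

lemma tsum_ite_eq_sum {α β R : Type*} [AddCommMonoid R] [TopologicalSpace R] (T : Finset α)
    {e : α → β} (he : Function.Injective e) {P : β → Prop} [DecidablePred P]
    (hP : ∀ q, P q ↔ ∃ p ∈ T, e p = q) (f : β → R) :
    ∑' q, (if P q then f q else 0) = ∑ p ∈ T, f (e p) := by
  rw [tsum_eq_sum (s := T.map ⟨e, he⟩), Finset.sum_map]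
  · exact Finset.sum_congr rfl fun p hp => if_pos ((hP _).2 ⟨p, hp, rfl⟩)
  · exact fun q hq => if_neg fun hPq => hq (by simpa using (hP q).1 hPq)

lemma tsum_eq_sum_posPosFinset (N D : ℕ) [NeZero D] (m n : ℕ) (h : ℤ) (X : ℂ) :
    ∑' q : ℤ × ℤ × ℤ × ℤ × ℤ × ℤ,
        (if q.1 * q.2.2.2.1 - q.2.1 * q.2.2.1 = 1 ∧ (N : ℤ) ∣ q.2.2.1 ∧
            0 < q.1 ∧ 0 < q.2.2.1 ∧ 0 < q.2.2.2.2.1 ∧ 0 < q.2.2.2.2.2 ∧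
            (D : ℤ) = q.2.2.2.2.1 * q.1 + q.2.2.2.2.2 * q.2.2.1 ∧
            h = -(q.2.2.2.2.1 * q.2.1) - q.2.2.2.2.2 * q.2.2.2.1 then
          ((q.1 : ℂ) * X - (q.2.2.2.2.2 : ℂ) / D) ^ n *
            ((q.2.2.1 : ℂ) * X + (q.2.2.2.2.1 : ℂ) / D) ^ m
        else 0) = ∑ p ∈ posPosFinset N D h, periodMonomial D m n h X p := by
  rw [tsum_ite_eq_sum (posPosFinset N D h) (e := fun p => (p.1, p.2.1, p.2.2.1, p.2.2.2,
    shiftedEntry D h p.2.2.1 p.2.2.2, -shiftedEntry D h p.1 p.2.1))]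
  · simp [periodMonomial, neg_div]
  · intro p p' hp
    grind
  · rintro ⟨a, b, c, d, k, l⟩
    constructor
    · rintro ⟨hdet, hN, ha, hc, hk, hl, hDh⟩
      obtain ⟨hk_eq, hl_eq⟩ := (linear_relations_iff D h hdet k l).1 hDh
      exact ⟨(a, b, c, d), mem_posPosFinset.2
        ⟨hdet, hN, ha, hc, hk.trans_eq hk_eq, hl.trans_eq hl_eq⟩, by rw [hk_eq, hl_eq]⟩
    · rintro ⟨⟨a, b, c, d⟩, hp, hpq⟩
      cases hpq
      obtain ⟨hdet, hN, ha, hc, hk, hl⟩ := mem_posPosFinset.1 hp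
      exact ⟨hdet, hN, ha, hc, hk, hl, (linear_relations_iff D h hdet _ _).2 ⟨rfl, rfl⟩⟩

lemma tsum_eq_sum_posNegFinset (N D : ℕ) [NeZero D] (m n : ℕ) (h : ℤ) (X : ℂ) :
    ∑' q : ℤ × ℤ × ℤ × ℤ × ℤ × ℤ,
        (if q.1 * q.2.2.2.1 - q.2.1 * q.2.2.1 = 1 ∧ (N : ℤ) ∣ q.2.2.1 ∧
            0 < q.1 ∧ q.2.2.1 < 0 ∧ 0 < q.2.2.2.2.1 ∧ 0 < q.2.2.2.2.2 ∧
            (D : ℤ) = q.2.2.2.2.1 * q.1 - q.2.2.2.2.2 * q.2.2.1 ∧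
            h = -(q.2.2.2.2.1 * q.2.1) + q.2.2.2.2.2 * q.2.2.2.1 then
          ((q.1 : ℂ) * X + (q.2.2.2.2.2 : ℂ) / D) ^ n *
            ((q.2.2.1 : ℂ) * X + (q.2.2.2.2.1 : ℂ) / D) ^ m
        else 0) = ∑ p ∈ posNegFinset N D h, periodMonomial D m n h X p := by
  have hrel {a b c d : ℤ} (hdet : a * d - b * c = 1) (k l : ℤ) :
      ((D : ℤ) = k * a - l * c ∧ h = -(k * b) + l * d) ↔
        k = shiftedEntry D h c d ∧ l = shiftedEntry D h a b := by
    simpa [sub_eq_add_neg] using linear_relations_iff D h hdet k (-l)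
  rw [tsum_ite_eq_sum (posNegFinset N D h) (e := fun p => (p.1, p.2.1, p.2.2.1, p.2.2.2,
    shiftedEntry D h p.2.2.1 p.2.2.2, shiftedEntry D h p.1 p.2.1))]
  · simp [periodMonomial]
  · intro p p' hp
    grind
  · rintro ⟨a, b, c, d, k, l⟩
    constructor
    · rintro ⟨hdet, hN, ha, hc, hk, hl, hDh⟩
      obtain ⟨hk_eq, hl_eq⟩ := (hrel hdet k l).1 hDh
      exact ⟨(a, b, c, d), mem_posNegFinset.2
        ⟨hdet, hN, ha, hc, hk.trans_eq hk_eq, hl.trans_eq hl_eq⟩, by rw [hk_eq, hl_eq]⟩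
    · rintro ⟨⟨a, b, c, d⟩, hp, hpq⟩
      cases hpq
      obtain ⟨hdet, hN, ha, hc, hk, hl⟩ := mem_posNegFinset.1 hp
      exact ⟨hdet, hN, ha, hc, hk, hl, (hrel hdet _ _).2 ⟨rfl, rfl⟩⟩

lemma cconst_mul (w n : ℕ) :
    cconst w n * (2 * I) ^ (w + 1) = (-1) ^ n * (4 * π * I) * w.choose n := by
  have hcancel : (2 * I : ℂ) ^ (-(w : ℤ) - 1) * (2 * I) ^ (w + 1) = 1 := by
    rw [← zpow_natCast, ← zpow_add₀ (by simp)]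
    simp
  rw [cconst]
  linear_combination (-1) ^ n * (4 * π * I) * w.choose n * hcancel

/-- The sign is `(-1) ^ (n + 1)` because `n - 1` would be truncated at `n = 0`. -/
theorem F5_eval_general (N w : ℕ) (hwe : Even w) (n : ℕ) (hnw : n ≤ w) (D : ℕ) (hD : 0 < D)
    (h : ℤ) (X : ℂ) :
    intI (fun z => S5 N D w n h z * (X - z) ^ w) +
      (-1 : ℂ) ^ (n + 1) * intI (fun z => S5 N D w n (-h) z * (X + z) ^ w) =
    cconst w n * (2 * Complex.I) ^ (w + 1) *
      (-(∑' q : ℤ × ℤ × ℤ × ℤ × ℤ × ℤ,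
          if q.1 * q.2.2.2.1 - q.2.1 * q.2.2.1 = 1 ∧ (N : ℤ) ∣ q.2.2.1 ∧
              0 < q.1 ∧ 0 < q.2.2.1 ∧ 0 < q.2.2.2.2.1 ∧ 0 < q.2.2.2.2.2 ∧
              (D : ℤ) = q.2.2.2.2.1 * q.1 + q.2.2.2.2.2 * q.2.2.1 ∧
              h = -(q.2.2.2.2.1 * q.2.1) - q.2.2.2.2.2 * q.2.2.2.1 then
            ((q.1 : ℂ) * X - (q.2.2.2.2.2 : ℂ) / D) ^ n *
              ((q.2.2.1 : ℂ) * X + (q.2.2.2.2.1 : ℂ) / D) ^ (w - n)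
          else 0) +
        (∑' q : ℤ × ℤ × ℤ × ℤ × ℤ × ℤ,
          if q.1 * q.2.2.2.1 - q.2.1 * q.2.2.1 = 1 ∧ (N : ℤ) ∣ q.2.2.1 ∧
              0 < q.1 ∧ q.2.2.1 < 0 ∧ 0 < q.2.2.2.2.1 ∧ 0 < q.2.2.2.2.2 ∧
              (D : ℤ) = q.2.2.2.2.1 * q.1 - q.2.2.2.2.2 * q.2.2.1 ∧
              h = -(q.2.2.2.2.1 * q.2.1) + q.2.2.2.2.2 * q.2.2.2.1 then
            ((q.1 : ℂ) * X + (q.2.2.2.2.2 : ℂ) / D) ^ n *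
              ((q.2.2.1 : ℂ) * X + (q.2.2.2.2.1 : ℂ) / D) ^ (w - n)
          else 0)) := by
  obtain ⟨m, rfl⟩ := Nat.exists_eq_add_of_le' hnw
  have : NeZero D := ⟨hD.ne'⟩
  have hpar : (-1 : ℂ) ^ m = (-1) ^ n := neg_one_pow_congr (Nat.even_add.1 hwe)
  rw [intI_S5_add_intI_S5_neg N D hwe,
    Finset.sum_congr rfl fun p hp => integral_s5Summand_mul_pow hp m n X, ← Finset.mul_sum,
    sum_sign_mul_eq N D h (periodMonomial_neg D hwe h X), Nat.add_sub_cancel,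
    tsum_eq_sum_posPosFinset, tsum_eq_sum_posNegFinset, cconst_mul, hpar]
  ring

/-- the twisted period-polynomial contribution of the matrices with
`ac(ah/D+b)(ch/D+d) < 0`. -/
theorem F5_eval (N : ℕ) (hN : 1 ≤ N) (w : ℕ) (hw : 2 ≤ w) (hwe : Even w)
    (n : ℕ) (hn0 : 0 < n) (hnw : n < w) (D : ℕ) (hD : 1 < D) (h : ℤ) (hh : 0 < h)
    (X : ℂ) :
    intI (fun z => S5 N D w n h z * (X - z) ^ w) +
      (-1 : ℂ) ^ (n - 1) * intI (fun z => S5 N D w n (-h) z * (X + z) ^ w) =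
    cconst w n * (2 * Complex.I) ^ (w + 1) *
      (-(∑' q : ℤ × ℤ × ℤ × ℤ × ℤ × ℤ,
          if q.1 * q.2.2.2.1 - q.2.1 * q.2.2.1 = 1 ∧ (N : ℤ) ∣ q.2.2.1 ∧
              0 < q.1 ∧ 0 < q.2.2.1 ∧ 0 < q.2.2.2.2.1 ∧ 0 < q.2.2.2.2.2 ∧
              (D : ℤ) = q.2.2.2.2.1 * q.1 + q.2.2.2.2.2 * q.2.2.1 ∧
              h = -(q.2.2.2.2.1 * q.2.1) - q.2.2.2.2.2 * q.2.2.2.1 then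
            ((q.1 : ℂ) * X - (q.2.2.2.2.2 : ℂ) / D) ^ n *
              ((q.2.2.1 : ℂ) * X + (q.2.2.2.2.1 : ℂ) / D) ^ (w - n)
          else 0) +
        (∑' q : ℤ × ℤ × ℤ × ℤ × ℤ × ℤ,
          if q.1 * q.2.2.2.1 - q.2.1 * q.2.2.1 = 1 ∧ (N : ℤ) ∣ q.2.2.1 ∧
              0 < q.1 ∧ q.2.2.1 < 0 ∧ 0 < q.2.2.2.2.1 ∧ 0 < q.2.2.2.2.2 ∧
              (D : ℤ) = q.2.2.2.2.1 * q.1 - q.2.2.2.2.2 * q.2.2.1 ∧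
              h = -(q.2.2.2.2.1 * q.2.1) + q.2.2.2.2.2 * q.2.2.2.1 then
            ((q.1 : ℂ) * X + (q.2.2.2.2.2 : ℂ) / D) ^ n *
              ((q.2.2.1 : ℂ) * X + (q.2.2.2.2.1 : ℂ) / D) ^ (w - n)
          else 0)) := by
  rw [show (-1 : ℂ) ^ (n - 1) = (-1) ^ (n + 1) from neg_one_pow_congr (by grind)]
  exact F5_eval_general N w hwe n hnw.le D (by omega) h X

end
end
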